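/- arXiv:2605.20527 — 3 statements merged into one kernel-verified Lean document; each statement's English description precedes it below -/
import Mathlib

section
/- There exists a constant c* > 0 such that for every F in the Bargmann–Fock space F²(ℂ) with ‖F‖_γ = 1 one has ∫_ℂ |F'(z)|² dγ(z) ≥ ∫_ℂ |F(z)|² ln|F(z)|² dγ(z) + c* · inf_{β ∈ ℂ, |c|=1} ‖F − c e^{βz − |β|²/2}‖_γ², where F' is the complex derivative of the entire function F. -/
open MeasureTheory

/-- The Fock norm of a function `F : ℂ → E`:
`‖F‖_γ² = (1/π) ∫_ℂ ‖F(z)‖² e^{-|z|²} dm(z)`. -/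
noncomputable def fockNorm {E : Type*} [NormedAddCommGroup E] (F : ℂ → E) : ℝ :=
  Real.sqrt ((1 / Real.pi) * ∫ z : ℂ, ‖F z‖ ^ 2 * Real.exp (-‖z‖ ^ 2))

/-- Integral against the normalized Gaussian measure `dγ(z) = (1/π) e^{−|z|²} dm(z)`. -/
noncomputable def gammaInt (f : ℂ → ℝ) : ℝ :=
  (1 / Real.pi) * ∫ z : ℂ, f z * Real.exp (-‖z‖ ^ 2)

/-!
For normalized `F`, the deficit `δ(F) = ∫ |F'|² dγ - ∫ |F|² log |F|² dγ` equals
`-∫ |F|² log u dγ - 1`, where `u(z) = |F(z)|² e^{-|z|²}` is the Husimi function. Hence `δ` is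
invariant under Weyl translations, and one may move the maximum of `u` to the origin. The translated
function `G` satisfies `G'(0) = 0`, and with `T = |G(0)|² ≤ 1` the squared distance from `F` to the
coherent states is at most `2(1 - T)`, so it suffices to bound `δ(G)` from below by a multiple of
`1 - T`.

* If `T` is close to `1`, expand `t log t` at `t = 1` in terms of `s = G/G(0) - 1`. Since `s`
  vanishes to second order at the origin, only the frequencies `k ≥ 2` occur, and there `∫ |s'|² dγ`
  pays for the quadratic term `2 ∫ |s|² dγ`; what remains is `-log T ≥ 1 - T` up to higher order.
* If `T ≤ e^{-2}`, then `δ(G) ≥ -log T - 1 ≥ 1` because `u ≤ T`.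
* In between, apply the Gaussian logarithmic Sobolev inequality (monotone transport on the line and
  tensorization of the entropy) to the perturbed density `|G|² (1 - ε e^{-N|z|²})`. For large `N`
  the weight concentrates at the origin, where `log |G|² ≈ log T`, so the term linear in `ε` yields
  a gain of order `-T log T / N`, while the terms quadratic in `ε` stay bounded.
-/

open Set Filter Topology ProbabilityTheory ComplexConjugate
open scoped ENNReal

theorem exists_monotone_transport {p q : ℝ → ℝ} {a b : ℝ} (hab : a ≤ b)
    (hp : Continuous p) (hq : Continuous q) (hp0 : ∀ x, 0 < p x) (hq0 : ∀ x, 0 < q x)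
    (hpq : ∫ x in a..b, p x = ∫ x in a..b, q x) :
    ∃ T : ℝ → ℝ, T a = a ∧ T b = b ∧ ∀ x ∈ Icc a b, HasDerivAt T (p x / q (T x)) x := by
  set P : ℝ → ℝ := fun x => ∫ t in a..x, p t
  set Q : ℝ → ℝ := fun x => ∫ t in a..x, q t
  have hP (x : ℝ) : HasDerivAt P (p x) x := (hp.integral_hasStrictDerivAt a x).hasDerivAt
  have hQ (x : ℝ) : HasStrictDerivAt Q (q x) x := hq.integral_hasStrictDerivAt a x
  have hQ_cont : Continuous Q :=
    continuous_iff_continuousAt.2 fun x => (hQ x).hasDerivAt.continuousAt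
  have hQ_mono : StrictMono Q := strictMono_of_hasDerivAt_pos (fun x => (hQ x).hasDerivAt) hq0
  have hP_mono : StrictMono P := strictMono_of_hasDerivAt_pos hP hp0
  have hQ_emb : IsOpenEmbedding Q := .of_continuous_injective_isOpenMap hQ_cont
    hQ_mono.injective (isOpenMap_of_hasStrictDerivAt hQ fun x => (hq0 x).ne')
  let e := hQ_emb.toOpenPartialHomeomorph Q
  have he (x : ℝ) : e.symm (Q x) = x := e.left_inv (mem_univ x)
  have hPa : P a = Q a := by simp [P, Q]
  refine ⟨e.symm ∘ P, ?_, ?_, fun x hx => ?_⟩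
  · simp only [Function.comp_apply, hPa, he]
  · simp only [Function.comp_apply, show P b = Q b from hpq, he]
  · obtain ⟨y, -, hy⟩ : P x ∈ Q '' Icc a b :=
      intermediate_value_Icc hab hQ_cont.continuousOn
        ⟨hPa ▸ hP_mono.monotone hx.1, (hP_mono.monotone hx.2).trans_eq hpq⟩
    have he_deriv : HasDerivAt e.symm (q (e.symm (P x)))⁻¹ (P x) :=
      e.hasDerivAt_symm ⟨y, mem_univ y, hy⟩ (hq0 _).ne' (hQ _).hasDerivAt
    simpa only [div_eq_inv_mul, Function.comp_apply] using he_deriv.comp x (hP x)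

-- `log t ≤ t - 1` for the transport density `t`, then `(f' + 2 d f)² ≥ 0`.
theorem mul_log_le_of_uniformlyConvex {v v' u d f f' r : ℝ} (hf : 0 < f) (hr : 0 < r)
    (hconv : v + v' * d + d ^ 2 ≤ u) :
    f * Real.log f - f * Real.log r ≤
      (f * Real.exp (-v) / r / Real.exp (-u) - 1) * f + d * (f' - v' * f) + f' ^ 2 / (4 * f) := by
  set t := f * Real.exp (-v) / r / Real.exp (-u)
  have hlog : Real.log t = Real.log f - v - Real.log r + u := by
    rw [Real.log_div (by positivity) (by positivity), Real.log_div (by positivity) hr.ne',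
      Real.log_mul hf.ne' (by positivity), Real.log_exp, Real.log_exp]
    ring
  have hsq : 0 ≤ f' ^ 2 / (4 * f) + d * f' + d ^ 2 * f := by
    have : f' ^ 2 / (4 * f) + d * f' + d ^ 2 * f = (f' + 2 * d * f) ^ 2 / (4 * f) := by
      field_simp
      ring
    rw [this]
    positivity
  have htransport := mul_le_mul_of_nonneg_left (Real.log_le_sub_one_of_pos (x := t)
    (by positivity)) hf.le
  have := mul_le_mul_of_nonneg_left hconv hf.le
  rw [hlog] at htransport
  linarith

theorem intervalIntegral_mul_log_sub_le_of_transport {V V' f f' T : ℝ → ℝ} {a b r : ℝ}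
    (hab : a ≤ b) (hV : ∀ x, HasDerivAt V (V' x) x) (hV' : Continuous V')
    (hconv : ∀ x y, V x + V' x * (y - x) + (y - x) ^ 2 ≤ V y)
    (hf : ∀ x, HasDerivAt f (f' x) x) (hf' : Continuous f') (hf0 : ∀ x, 0 < f x) (hr : 0 < r)
    (hTa : T a = a) (hTb : T b = b)
    (hT : ∀ x ∈ Icc a b, HasDerivAt T (f x * Real.exp (-V x) / r / Real.exp (-V (T x))) x) :
    (∫ x in a..b, f x * Real.log (f x) * Real.exp (-V x)) -
        (∫ x in a..b, f x * Real.exp (-V x)) * Real.log r ≤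
      ∫ x in a..b, f' x ^ 2 / (4 * f x) * Real.exp (-V x) := by
  have hVc : Continuous V := continuous_iff_continuousAt.2 fun x => (hV x).continuousAt
  have hfc : Continuous f := continuous_iff_continuousAt.2 fun x => (hf x).continuousAt
  have : Continuous fun x => Real.log (f x) := hfc.log fun x => (hf0 x).ne'
  have hDc : Continuous fun x => f' x ^ 2 / (4 * f x) :=
    (hf'.pow 2).div (by fun_prop) fun x => by linarith [hf0 x]
  set w : ℝ → ℝ := fun x => Real.exp (-V x)
  have hwc : Continuous w := by fun_prop
  have hw0 (x : ℝ) : 0 < w x := Real.exp_pos _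
  have hw (x : ℝ) : HasDerivAt w (w x * -V' x) x := (hV x).fun_neg.exp
  have hint {g : ℝ → ℝ} (hg : Continuous g) : IntervalIntegrable g volume a b :=
    hg.intervalIntegrable a b
  have hTc : ContinuousOn T (uIcc a b) := by
    rw [uIcc_of_le hab]
    exact fun x hx => (hT x hx).continuousAt.continuousWithinAt
  have hT'c : ContinuousOn (fun x => f x * w x / r / w (T x)) (uIcc a b) :=
    .div (by fun_prop) (hwc.comp_continuousOn hTc) fun x _ => (hw0 _).ne'
  set B' : ℝ → ℝ := fun x =>
    (f x * w x / r / w (T x) - 1) * (f x * w x) + (T x - x) * (f' x * w x + f x * (w x * -V' x))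
  have hB'c : ContinuousOn B' (uIcc a b) := by fun_prop
  have hboundary : ∫ x in a..b, B' x = 0 := by
    have hB (x : ℝ) (hx : x ∈ uIcc a b) :
        HasDerivAt (fun x => (T x - x) * (f x * w x)) (B' x) x :=
      ((hT x (uIcc_of_le hab ▸ hx)).fun_sub (hasDerivAt_id' x)).fun_mul ((hf x).fun_mul (hw x))
    rw [intervalIntegral.integral_eq_sub_of_hasDerivAt hB hB'c.intervalIntegrable, hTa, hTb]
    simp only [sub_self, zero_mul]
  have hpt (x : ℝ) : f x * Real.log (f x) * w x - f x * w x * Real.log r ≤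
      B' x + f' x ^ 2 / (4 * f x) * w x := by
    have := mul_le_mul_of_nonneg_right
      (mul_log_le_of_uniformlyConvex (f' := f' x) (hf0 x) hr (hconv x (T x))) (hw0 x).le
    simp only [B', w] at this ⊢
    linarith
  have hmono := intervalIntegral.integral_mono hab (hint (by fun_prop))
    (hB'c.intervalIntegrable.add (hint (by fun_prop))) hpt
  rwa [intervalIntegral.integral_sub (hint (by fun_prop)) (hint (by fun_prop)),
    intervalIntegral.integral_mul_const, intervalIntegral.integral_add hB'c.intervalIntegrable
      (hint (by fun_prop)), hboundary, zero_add] at hmono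

theorem intervalIntegral_mul_log_le_of_uniformlyConvex {V V' f f' : ℝ → ℝ} {a b : ℝ} (hab : a < b)
    (hV : ∀ x, HasDerivAt V (V' x) x) (hV' : Continuous V')
    (hconv : ∀ x y, V x + V' x * (y - x) + (y - x) ^ 2 ≤ V y)
    (hf : ∀ x, HasDerivAt f (f' x) x) (hf' : Continuous f') (hf0 : ∀ x, 0 < f x) :
    (∫ x in a..b, f x * Real.log (f x) * Real.exp (-V x)) -
        (∫ x in a..b, f x * Real.exp (-V x)) *
          Real.log ((∫ x in a..b, f x * Real.exp (-V x)) / ∫ x in a..b, Real.exp (-V x)) ≤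
      ∫ x in a..b, f' x ^ 2 / (4 * f x) * Real.exp (-V x) := by
  have hVc : Continuous V := continuous_iff_continuousAt.2 fun x => (hV x).continuousAt
  have hfc : Continuous f := continuous_iff_continuousAt.2 fun x => (hf x).continuousAt
  have hpos {g : ℝ → ℝ} (hg : Continuous g) (hg0 : ∀ x, 0 < g x) : 0 < ∫ x in a..b, g x :=
    intervalIntegral.intervalIntegral_pos_of_pos (hg.intervalIntegrable a b) hg0 hab
  have hfw0 (x : ℝ) : 0 < f x * Real.exp (-V x) := mul_pos (hf0 x) (Real.exp_pos _)
  have hr := div_pos (hpos (by fun_prop) hfw0)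
    (hpos (g := fun x => Real.exp (-V x)) (by fun_prop) fun x => Real.exp_pos _)
  obtain ⟨T, hTa, hTb, hT⟩ := exists_monotone_transport hab.le
    ((by fun_prop : Continuous fun x => f x * Real.exp (-V x)).div_const _)
    (q := fun x => Real.exp (-V x)) (by fun_prop) (fun x => div_pos (hfw0 x) hr)
    (fun x => Real.exp_pos _)
    (by rw [intervalIntegral.integral_div]; exact div_div_cancel₀ (left_ne_zero_of_mul hr.ne'))
  exact intervalIntegral_mul_log_sub_le_of_transport hab.le hV hV' hconv hf hf' hf0 hr hTa hTb hT

/-- The entropy functional `∫ f log f - (∫ f) log (∫ f)` of a function with respect to `μ`. -/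
noncomputable def entropy {α : Type*} [MeasurableSpace α] (μ : Measure α) (f : α → ℝ) : ℝ :=
  ∫ x, f x * Real.log (f x) ∂μ - (∫ x, f x ∂μ) * Real.log (∫ x, f x ∂μ)

theorem entropy_withDensity_le_of_uniformlyConvex {V V' f f' : ℝ → ℝ} {μ : Measure ℝ}
    [IsProbabilityMeasure μ] (hμ : μ = volume.withDensity fun x => ENNReal.ofReal (Real.exp (-V x)))
    (hV : ∀ x, HasDerivAt V (V' x) x) (hV' : Continuous V')
    (hconv : ∀ x y, V x + V' x * (y - x) + (y - x) ^ 2 ≤ V y)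
    (hf : ∀ x, HasDerivAt f (f' x) x) (hf' : Continuous f') (hf0 : ∀ x, 0 < f x)
    (hfi : Integrable f μ) (hlog : Integrable (fun x => f x * Real.log (f x)) μ)
    (hD : Integrable (fun x => f' x ^ 2 / (4 * f x)) μ) :
    entropy μ f ≤ ∫ x, f' x ^ 2 / (4 * f x) ∂μ := by
  have hVc : Continuous V := continuous_iff_continuousAt.2 fun x => (hV x).continuousAt
  have hrestrict (g : ℝ → ℝ) (L : ℝ) :
      ∫ x in -L..L, g x ∂μ = ∫ x in -L..L, g x * Real.exp (-V x) := by
    have (s : Set ℝ) (hs : MeasurableSet s) :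
        ∫ x in s, g x ∂μ = ∫ x in s, g x * Real.exp (-V x) := by
      rw [hμ, setIntegral_withDensity_eq_setIntegral_toReal_smul (by fun_prop)
        (ae_of_all _ fun _ => ENNReal.ofReal_lt_top) g hs]
      simp only [ENNReal.toReal_ofReal (Real.exp_pos _).le, smul_eq_mul, mul_comm]
    simp only [intervalIntegral, this _ measurableSet_Ioc]
  have hlim {g : ℝ → ℝ} (hg : Integrable g μ) :
      Tendsto (fun L : ℝ => ∫ x in -L..L, g x * Real.exp (-V x)) atTop (𝓝 (∫ x, g x ∂μ)) := by
    simpa only [hrestrict, id] using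
      intervalIntegral_tendsto_integral hg tendsto_neg_atTop_atBot tendsto_id
  have hmass : Tendsto (fun L : ℝ => ∫ x in -L..L, Real.exp (-V x)) atTop (𝓝 1) := by
    simpa using hlim (integrable_const (μ := μ) (1 : ℝ))
  have hf_pos : 0 < ∫ x, f x ∂μ :=
    (integral_pos_iff_support_of_nonneg (fun x => (hf0 x).le) hfi).2 (by
      simp [Function.support_eq_univ fun x => (hf0 x).ne'])
  have hratio := ((hlim hfi).div hmass one_ne_zero).log (by simpa using hf_pos.ne')
  rw [div_one] at hratio
  refine le_of_tendsto_of_tendsto ((hlim hlog).sub ((hlim hfi).mul hratio)) (hlim hD) ?_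
  filter_upwards [eventually_gt_atTop 0] with L hL
  exact intervalIntegral_mul_log_le_of_uniformlyConvex (neg_lt_self hL) hV hV' hconv hf hf' hf0

theorem entropy_gaussianReal_le {f f' : ℝ → ℝ} (hf : ∀ x, HasDerivAt f (f' x) x)
    (hf' : Continuous f') (hf0 : ∀ x, 0 < f x) (hfi : Integrable f (gaussianReal 0 (1 / 2)))
    (hlog : Integrable (fun x => f x * Real.log (f x)) (gaussianReal 0 (1 / 2)))
    (hD : Integrable (fun x => f' x ^ 2 / (4 * f x)) (gaussianReal 0 (1 / 2))) :
    entropy (gaussianReal 0 (1 / 2)) f ≤ ∫ x, f' x ^ 2 / (4 * f x) ∂gaussianReal 0 (1 / 2) := by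
  refine entropy_withDensity_le_of_uniformlyConvex (V := fun x => x ^ 2 + Real.log √Real.pi)
    (V' := fun x => 2 * x) ?_ (fun x => ?_) (by fun_prop) (fun x y => by linarith)
    hf hf' hf0 hfi hlog hD
  · rw [gaussianReal_of_var_ne_zero 0 (by norm_num)]
    congr with x
    have hpi : 0 < √Real.pi := by positivity
    rw [gaussianPDF_def, gaussianPDFReal_def, neg_add, Real.exp_add, Real.exp_neg (Real.log _),
      Real.exp_log hpi]
    simp [mul_comm]
  · simpa using (hasDerivAt_pow 2 x).add_const (Real.log √Real.pi)

theorem integral_mul_log_sub_le_entropy {α : Type*} [MeasurableSpace α] {μ : Measure α}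
    {f h : α → ℝ} (hf0 : ∀ x, 0 ≤ f x) (hh0 : ∀ x, 0 ≤ h x) (hfh : ∀ᵐ x ∂μ, h x = 0 → f x = 0)
    (hf : Integrable f μ) (hflog : Integrable (fun x => f x * Real.log (f x)) μ)
    (hh : Integrable h μ) (hfhlog : Integrable (fun x => f x * Real.log (h x)) μ) :
    ∫ x, f x * Real.log (h x) ∂μ - (∫ x, f x ∂μ) * Real.log (∫ x, h x ∂μ) ≤ entropy μ f := by
  rw [entropy]
  set m := ∫ x, f x ∂μ
  set k := ∫ x, h x ∂μ
  rcases (integral_nonneg hf0 : 0 ≤ m).eq_or_lt with hm | hm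
  · have hf_zero : f =ᵐ[μ] 0 := (integral_eq_zero_iff_of_nonneg hf0 hf).1 hm.symm
    have (g : α → ℝ) : ∫ x, f x * g x ∂μ = 0 :=
      integral_eq_zero_of_ae (by filter_upwards [hf_zero] with x hx; simp [hx])
    simp [this, show m = 0 from hm.symm]
  have hk : 0 < k := by
    refine (integral_nonneg hh0 : 0 ≤ k).lt_of_ne fun hk => hm.ne' (integral_eq_zero_of_ae ?_)
    filter_upwards [hfh, (integral_eq_zero_iff_of_nonneg hh0 hh).1 hk.symm] with x hx hhx
      using hx hhx
  have hpt : ∀ᵐ x ∂μ, f x * Real.log (h x) - f x * Real.log (f x) ≤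
      f x * (Real.log k - Real.log m - 1) + h x * (m / k) := by
    filter_upwards [hfh] with x hx
    rcases (hf0 x).eq_or_lt with hfx | hfx
    · simpa [← hfx] using mul_nonneg (hh0 x) (div_nonneg hm.le hk.le)
    · have hhx : 0 < h x := (hh0 x).lt_of_ne fun h0 => hfx.ne' (hx h0.symm)
      have hlog := Real.log_le_sub_one_of_pos (x := h x * m / (k * f x)) (by positivity)
      rw [Real.log_div (by positivity) (by positivity), Real.log_mul hhx.ne' hm.ne',
        Real.log_mul hk.ne' hfx.ne'] at hlog
      calc
        _ = f x * (Real.log k - Real.log m) +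
            f x * (Real.log (h x) + Real.log m - (Real.log k + Real.log (f x))) := by ring
        _ ≤ f x * (Real.log k - Real.log m) + f x * (h x * m / (k * f x) - 1) := by gcongr
        _ = _ := by field_simp; ring
  have hint := integral_mono_ae (hfhlog.sub hflog) ((hf.mul_const _).add (hh.mul_const _)) hpt
  rw [integral_sub' hfhlog hflog, integral_add' (hf.mul_const _) (hh.mul_const _),
    integral_mul_const, integral_mul_const] at hint
  change _ ≤ m * _ + k * _ at hint
  rw [mul_div_cancel₀ m hk.ne'] at hint
  linarith

section Prod

variable {α β : Type*} [MeasurableSpace α] [MeasurableSpace β] {μ : Measure α} {ν : Measure β}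
  [IsProbabilityMeasure μ] [IsProbabilityMeasure ν] {f : α × β → ℝ}

theorem integrable_mul_log_integral_prod_right (hf0 : ∀ p, 0 ≤ f p)
    (hf : Integrable f (μ.prod ν))
    (hlog : Integrable (fun p => f p * Real.log (f p)) (μ.prod ν)) :
    Integrable (fun x => (∫ y, f (x, y) ∂ν) * Real.log (∫ y, f (x, y) ∂ν)) μ := by
  refine (hlog.integral_prod_left.norm.add (integrable_const 1)).mono'
    (Real.continuous_mul_log.comp_aestronglyMeasurable hf.integral_prod_left.1) ?_
  filter_upwards [hf.prod_right_ae, hlog.prod_right_ae] with x hfx hlogx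
  have hjensen : (∫ y, f (x, y) ∂ν) * Real.log (∫ y, f (x, y) ∂ν) ≤
      ∫ y, f (x, y) * Real.log (f (x, y)) ∂ν :=
    Real.convexOn_mul_log.map_integral_le Real.continuous_mul_log.continuousOn isClosed_Ici
      (ae_of_all _ fun y => hf0 (x, y)) hfx hlogx
  have hint_nonneg : 0 ≤ ∫ y, f (x, y) ∂ν := integral_nonneg fun y => hf0 (x, y)
  have hlower := Real.self_sub_one_le_mul_log hint_nonneg
  simp only [Pi.add_apply, Real.norm_eq_abs]
  exact abs_le.2 ⟨by linarith [abs_nonneg (∫ y, f (x, y) * Real.log (f (x, y)) ∂ν)],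
    by linarith [le_abs_self (∫ y, f (x, y) * Real.log (f (x, y)) ∂ν)]⟩

theorem integrable_entropy_prod_right (hf0 : ∀ p, 0 ≤ f p) (hf : Integrable f (μ.prod ν))
    (hlog : Integrable (fun p => f p * Real.log (f p)) (μ.prod ν)) :
    Integrable (fun x => entropy ν fun y => f (x, y)) μ :=
  hlog.integral_prod_left.sub (integrable_mul_log_integral_prod_right hf0 hf hlog)

theorem integrable_entropy_prod_left (hf0 : ∀ p, 0 ≤ f p) (hf : Integrable f (μ.prod ν))
    (hlog : Integrable (fun p => f p * Real.log (f p)) (μ.prod ν)) :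
    Integrable (fun y => entropy μ fun x => f (x, y)) ν :=
  integrable_entropy_prod_right (fun p => hf0 p.swap) hf.swap hlog.swap

theorem entropy_integral_prod_right_le (hf0 : ∀ p, 0 ≤ f p) (hfm : Measurable f)
    (hf : Integrable f (μ.prod ν))
    (hlog : Integrable (fun p => f p * Real.log (f p)) (μ.prod ν)) :
    entropy μ (fun x => ∫ y, f (x, y) ∂ν) ≤ ∫ y, entropy μ (fun x => f (x, y)) ∂ν := by
  set g : α → ℝ := fun x => ∫ y, f (x, y) ∂ν
  have hg0 (x : α) : 0 ≤ g x := integral_nonneg fun y => hf0 (x, y)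
  have hg : Measurable g := hfm.stronglyMeasurable.integral_prod_right'.measurable
  have hg_int : Integrable g μ := hf.integral_prod_left
  have hflog : Integrable (fun p => f p * Real.log (g p.1)) (μ.prod ν) := by
    refine (integrable_prod_iff (by fun_prop)).2
      ⟨hf.prod_right_ae.mono fun x hx => hx.mul_const (Real.log (g x)), ?_⟩
    have := (integrable_mul_log_integral_prod_right hf0 hf hlog).norm
    refine this.congr (ae_of_all _ fun x => ?_)
    simp only [norm_mul, integral_mul_const, Real.norm_of_nonneg (hf0 _),
      Real.norm_of_nonneg (hg0 x), g]
  have hg_zero : ∀ᵐ y ∂ν, ∀ᵐ x ∂μ, g x = 0 → f (x, y) = 0 := by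
    refine (Measure.ae_ae_comm (p := fun x y => g x = 0 → f (x, y) = 0) ?_).1 ?_
    · exact ((hg.comp measurable_fst) (measurableSet_singleton 0)).himp
        (hfm (measurableSet_singleton 0))
    · filter_upwards [hf.prod_right_ae] with x hx
      by_cases hgx : g x = 0
      · filter_upwards [(integral_eq_zero_iff_of_nonneg (fun y => hf0 (x, y)) hx).1 hgx] with y hy _
          using hy
      · exact ae_of_all _ fun y h => absurd h hgx
  calc
    entropy μ g = ∫ y, ((∫ x, f (x, y) * Real.log (g x) ∂μ) -
        (∫ x, f (x, y) ∂μ) * Real.log (∫ x, g x ∂μ)) ∂ν := by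
      rw [integral_sub hflog.integral_prod_right (hf.integral_prod_right.mul_const _),
        integral_mul_const, ← integral_prod_symm _ hflog, ← integral_prod_symm _ hf,
        integral_prod _ hflog, integral_prod _ hf]
      simp only [integral_mul_const]
      rfl
    _ ≤ _ := by
      refine integral_mono_ae (hflog.integral_prod_right.sub (hf.integral_prod_right.mul_const _))
        (integrable_entropy_prod_left hf0 hf hlog) ?_
      filter_upwards [hg_zero, hf.prod_left_ae, hlog.prod_left_ae, hflog.prod_left_ae]
        with y hy hfy hlogy hflogy
      exact integral_mul_log_sub_le_entropy (fun x => hf0 (x, y)) hg0 hy hfy hlogy hg_int hflogy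

theorem entropy_prod_le (hf0 : ∀ p, 0 ≤ f p) (hfm : Measurable f) (hf : Integrable f (μ.prod ν))
    (hlog : Integrable (fun p => f p * Real.log (f p)) (μ.prod ν)) :
    entropy (μ.prod ν) f ≤ ∫ x, entropy ν (fun y => f (x, y)) ∂μ +
      ∫ y, entropy μ (fun x => f (x, y)) ∂ν := by
  have hchain : entropy (μ.prod ν) f =
      ∫ x, entropy ν (fun y => f (x, y)) ∂μ + entropy μ (fun x => ∫ y, f (x, y) ∂ν) := by
    simp only [entropy]
    rw [integral_sub hlog.integral_prod_left (integrable_mul_log_integral_prod_right hf0 hf hlog),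
      integral_prod _ hlog, integral_prod _ hf]
    ring
  rw [hchain]
  gcongr
  exact entropy_integral_prod_right_le hf0 hfm hf hlog

end Prod

/-- The normalized Gaussian measure `dγ(z) = (1/π) e^{-|z|²} dm(z)` as a measure, which gives
access to the library of integration; `gammaInt` is the integral against it. -/
noncomputable def complexGaussian : Measure ℂ :=
  volume.withDensity fun z => ENNReal.ofReal (Real.pi⁻¹ * Real.exp (-‖z‖ ^ 2))

local notation "γ" => complexGaussian

theorem integral_complexGaussian {E : Type*} [NormedAddCommGroup E] [NormedSpace ℝ E] (f : ℂ → E) :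
    ∫ z, f z ∂γ = ∫ z : ℂ, (Real.pi⁻¹ * Real.exp (-‖z‖ ^ 2)) • f z := by
  rw [complexGaussian, integral_withDensity_eq_integral_toReal_smul (by fun_prop)
    (ae_of_all _ fun _ => ENNReal.ofReal_lt_top)]
  congr with z
  rw [ENNReal.toReal_ofReal (by positivity)]

theorem gammaInt_eq_integral (f : ℂ → ℝ) : gammaInt f = ∫ z, f z ∂γ := by
  rw [integral_complexGaussian, gammaInt, one_div, ← integral_const_mul]
  congr with z
  rw [smul_eq_mul]
  ring

theorem integrable_complexGaussian_iff {E : Type*} [NormedAddCommGroup E] [NormedSpace ℝ E]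
    {f : ℂ → E} : Integrable f γ ↔ Integrable fun z : ℂ => Real.exp (-‖z‖ ^ 2) • f z := by
  rw [complexGaussian, integrable_withDensity_iff_integrable_smul' (by fun_prop)
    (ae_of_all _ fun _ => ENNReal.ofReal_lt_top),
    ← integrable_fun_smul_iff (inv_ne_zero Real.pi_ne_zero) fun z : ℂ => Real.exp (-‖z‖ ^ 2) • f z]
  congr! 2 with z
  rw [ENNReal.toReal_ofReal (by positivity), mul_smul]

theorem lintegral_complexGaussian {f : ℂ → ENNReal} (hf : Measurable f) :
    ∫⁻ z, f z ∂γ = ∫⁻ z : ℂ, ENNReal.ofReal (Real.pi⁻¹ * Real.exp (-‖z‖ ^ 2)) * f z :=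
  lintegral_withDensity_eq_lintegral_mul _ (by fun_prop) hf

theorem gaussianReal_prod_eq_withDensity :
    (gaussianReal 0 (1 / 2)).prod (gaussianReal 0 (1 / 2)) =
      volume.withDensity fun p : ℝ × ℝ =>
        ENNReal.ofReal (Real.pi⁻¹ * Real.exp (-(p.1 ^ 2 + p.2 ^ 2))) := by
  have hpdf (x : ℝ) : gaussianPDFReal 0 (1 / 2) x = (√Real.pi)⁻¹ * Real.exp (-x ^ 2) := by
    rw [gaussianPDFReal_def]
    norm_num [← mul_assoc, mul_comm √2]
  rw [gaussianReal_of_var_ne_zero 0 (by norm_num), prod_withDensity (measurable_gaussianPDF _ _)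
    (measurable_gaussianPDF _ _), ← Measure.volume_eq_prod]
  congr with p
  rw [gaussianPDF_def, ← ENNReal.ofReal_mul (gaussianPDFReal_nonneg _ _ _), hpdf, hpdf,
    neg_add, Real.exp_add, mul_mul_mul_comm, ← mul_inv, Real.mul_self_sqrt Real.pi_pos.le]

theorem measurePreserving_complexGaussian :
    MeasurePreserving Complex.measurableEquivRealProd γ
      ((gaussianReal 0 (1 / 2)).prod (gaussianReal 0 (1 / 2))) where
  measurable := Complex.measurableEquivRealProd.measurable
  map_eq := by
    refine Measure.ext_of_lintegral _ fun φ hφ => ?_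
    rw [lintegral_map hφ Complex.measurableEquivRealProd.measurable,
      lintegral_complexGaussian (by fun_prop), gaussianReal_prod_eq_withDensity,
      lintegral_withDensity_eq_lintegral_mul _ (by fun_prop) hφ,
      ← Complex.volume_preserving_equiv_real_prod.lintegral_comp (by fun_prop)]
    refine lintegral_congr fun z => ?_
    simp only [Pi.mul_apply, Complex.measurableEquivRealProd_apply, Complex.sq_norm,
      Complex.normSq_apply, ← sq]

instance : IsProbabilityMeasure γ := by
  rw [← measurePreserving_complexGaussian.symm.map_eq]
  exact Measure.isProbabilityMeasure_map
    Complex.measurableEquivRealProd.symm.measurable.aemeasurable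

instance : NullSingletonClass γ := by
  unfold complexGaussian
  infer_instance

theorem entropy_complexGaussian (f : ℂ → ℝ) :
    entropy γ f = entropy ((gaussianReal 0 (1 / 2)).prod (gaussianReal 0 (1 / 2)))
      (f ∘ Complex.measurableEquivRealProd.symm) := by
  have (g : ℂ → ℝ) : ∫ z, g z ∂γ = ∫ p, g (Complex.measurableEquivRealProd.symm p)
      ∂(gaussianReal 0 (1 / 2)).prod (gaussianReal 0 (1 / 2)) :=
    (measurePreserving_complexGaussian.symm.integral_comp
      Complex.measurableEquivRealProd.symm.measurableEmbedding g).symm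
  rw [entropy, entropy, this, this]
  rfl

theorem integral_entropy_gaussianReal_le {f f' : ℝ × ℝ → ℝ} (hf0 : ∀ p, 0 ≤ f p)
    (hf : ∀ x y, HasDerivAt (fun y => f (x, y)) (f' (x, y)) y) (hf' : Continuous f')
    (hzero : {p | f p = 0}.Countable)
    (hfi : Integrable f ((gaussianReal 0 (1 / 2)).prod (gaussianReal 0 (1 / 2))))
    (hlog : Integrable (fun p => f p * Real.log (f p))
      ((gaussianReal 0 (1 / 2)).prod (gaussianReal 0 (1 / 2))))
    (hD : Integrable (fun p => f' p ^ 2 / (4 * f p))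
      ((gaussianReal 0 (1 / 2)).prod (gaussianReal 0 (1 / 2)))) :
    ∫ x, entropy (gaussianReal 0 (1 / 2)) (fun y => f (x, y)) ∂gaussianReal 0 (1 / 2) ≤
      ∫ p, f' p ^ 2 / (4 * f p) ∂(gaussianReal 0 (1 / 2)).prod (gaussianReal 0 (1 / 2)) := by
  have : NullSingletonClass (gaussianReal 0 (1 / 2)) :=
    nullSingletonClass_gaussianReal (by norm_num)
  rw [integral_prod _ hD]
  refine integral_mono_ae (integrable_entropy_prod_right hf0 hfi hlog) hD.integral_prod_left ?_
  filter_upwards [(hzero.image Prod.fst).ae_notMem _, hfi.prod_right_ae, hlog.prod_right_ae,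
    hD.prod_right_ae] with x hx hfx hlogx hDx
  have hpos (y : ℝ) : 0 < f (x, y) := (hf0 _).lt_of_ne' fun h => hx ⟨(x, y), h, rfl⟩
  exact entropy_gaussianReal_le (hf x) (by fun_prop) hpos hfx hlogx hDx

theorem entropy_gaussianReal_prod_le {f f₁ f₂ : ℝ × ℝ → ℝ} (hf0 : ∀ p, 0 ≤ f p)
    (hfm : Measurable f) (hf₁ : ∀ x y, HasDerivAt (fun x => f (x, y)) (f₁ (x, y)) x)
    (hf₂ : ∀ x y, HasDerivAt (fun y => f (x, y)) (f₂ (x, y)) y) (hf₁c : Continuous f₁)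
    (hf₂c : Continuous f₂) (hzero : {p | f p = 0}.Countable)
    (hfi : Integrable f ((gaussianReal 0 (1 / 2)).prod (gaussianReal 0 (1 / 2))))
    (hlog : Integrable (fun p => f p * Real.log (f p))
      ((gaussianReal 0 (1 / 2)).prod (gaussianReal 0 (1 / 2))))
    (hD₁ : Integrable (fun p => f₁ p ^ 2 / (4 * f p))
      ((gaussianReal 0 (1 / 2)).prod (gaussianReal 0 (1 / 2))))
    (hD₂ : Integrable (fun p => f₂ p ^ 2 / (4 * f p))
      ((gaussianReal 0 (1 / 2)).prod (gaussianReal 0 (1 / 2)))) :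
    entropy ((gaussianReal 0 (1 / 2)).prod (gaussianReal 0 (1 / 2))) f ≤
      ∫ p, (f₁ p ^ 2 / (4 * f p) + f₂ p ^ 2 / (4 * f p))
        ∂(gaussianReal 0 (1 / 2)).prod (gaussianReal 0 (1 / 2)) := by
  have hswap := integral_entropy_gaussianReal_le (f := f ∘ Prod.swap) (f' := f₁ ∘ Prod.swap)
    (fun _ => hf0 _) (fun x y => hf₁ y x) (by fun_prop)
    (hzero.preimage_of_injOn Prod.swap_injective.injOn) hfi.swap hlog.swap hD₁.swap
  simp only [Function.comp_apply] at hswap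
  rw [integral_prod_swap fun p => f₁ p ^ 2 / (4 * f p)] at hswap
  have := entropy_prod_le hf0 hfm hfi hlog
  have := integral_entropy_gaussianReal_le hf0 hf₂ hf₂c hzero hfi hlog hD₂
  rw [integral_add hD₁ hD₂]
  simp only [Prod.swap_prod_mk] at hswap
  linarith

theorem integrable_fderiv_sq_div {f D : ℂ → ℝ} {μ : Measure ℂ} (hf : ContDiff ℝ 1 f)
    (hf0 : ∀ z, 0 ≤ f z) (hD : Integrable D μ) {v : ℂ}
    (hv : ∀ᵐ z ∂μ, fderiv ℝ f z v ^ 2 / (4 * f z) ≤ D z) :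
    Integrable (fun z => fderiv ℝ f z v ^ 2 / (4 * f z)) μ := by
  have hf'c : Continuous fun z => fderiv ℝ f z v :=
    (hf.continuous_fderiv one_ne_zero).clm_apply continuous_const
  refine hD.mono' ?_ (hv.mono fun z hz => ?_)
  · exact (hf'c.measurable.pow_const 2 |>.div
      (hf.continuous.measurable.const_mul 4)).aestronglyMeasurable
  · rwa [Real.norm_of_nonneg (div_nonneg (sq_nonneg _) (by linarith [hf0 z]))]

theorem entropy_complexGaussian_le {f D : ℂ → ℝ} (hf : ContDiff ℝ 1 f) (hf0 : ∀ z, 0 ≤ f z)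
    (hzero : {z | f z = 0}.Countable) (hfi : Integrable f γ)
    (hlog : Integrable (fun z => f z * Real.log (f z)) γ) (hD : Integrable D γ)
    (hfD : ∀ z, fderiv ℝ f z 1 ^ 2 + fderiv ℝ f z Complex.I ^ 2 ≤ 4 * f z * D z) :
    entropy γ f ≤ ∫ z, D z ∂γ := by
  let e : ℂ ≃ᵐ ℝ × ℝ := Complex.measurableEquivRealProd
  have he := measurePreserving_complexGaussian.symm
  have hcomp {g : ℂ → ℝ} (hg : Integrable g γ) := he.integrable_comp_of_integrable hg
  have he_apply (p : ℝ × ℝ) : e.symm p = p.1 + p.2 * Complex.I := Complex.mk_eq_add_mul_I p.1 p.2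
  have hec : Continuous e.symm := by simp only [funext he_apply]; fun_prop
  have hf'c (v : ℂ) : Continuous fun z => fderiv ℝ f z v :=
    (hf.continuous_fderiv one_ne_zero).clm_apply continuous_const
  have hderiv {c : ℝ → ℂ} {v : ℂ} {t : ℝ} (hc : HasDerivAt c v t) :
      HasDerivAt (fun t => f (c t)) (fderiv ℝ f (c t) v) t :=
    (hf.differentiable one_ne_zero _).hasFDerivAt.comp_hasDerivAt t hc
  have hpart_nonneg (v z : ℂ) : 0 ≤ fderiv ℝ f z v ^ 2 / (4 * f z) :=
    div_nonneg (sq_nonneg _) (by linarith [hf0 z])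
  have hsum_le : ∀ᵐ z ∂γ,
      fderiv ℝ f z 1 ^ 2 / (4 * f z) + fderiv ℝ f z Complex.I ^ 2 / (4 * f z) ≤ D z := by
    filter_upwards [hzero.ae_notMem γ] with z hz
    have := (hf0 z).lt_of_ne' hz
    rw [← add_div, div_le_iff₀ (by linarith)]
    linarith [hfD z]
  have h₁ := integrable_fderiv_sq_div hf hf0 hD
    (hsum_le.mono fun z hz => (le_add_of_nonneg_right (hpart_nonneg _ z)).trans hz)
  have h₂ := integrable_fderiv_sq_div hf hf0 hD
    (hsum_le.mono fun z hz => (le_add_of_nonneg_left (hpart_nonneg _ z)).trans hz)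
  calc
    entropy γ f = _ := entropy_complexGaussian f
    _ ≤ _ := entropy_gaussianReal_prod_le (f := f ∘ e.symm)
      (f₁ := fun p => fderiv ℝ f (e.symm p) 1) (f₂ := fun p => fderiv ℝ f (e.symm p) Complex.I)
      (fun _ => hf0 _) (hf.continuous.comp hec).measurable
      (fun x y => hderiv (c := fun x => e.symm (x, y)) ?_)
      (fun x y => hderiv (c := fun y => e.symm (x, y)) ?_) ((hf'c 1).comp hec)
      ((hf'c Complex.I).comp hec) (hzero.preimage_of_injOn e.symm.injective.injOn)
      (hcomp hfi) (hcomp hlog) (hcomp h₁) (hcomp h₂)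
    _ = ∫ z, (fderiv ℝ f z 1 ^ 2 / (4 * f z) + fderiv ℝ f z Complex.I ^ 2 / (4 * f z)) ∂γ :=
      he.integral_comp' fun z =>
        fderiv ℝ f z 1 ^ 2 / (4 * f z) + fderiv ℝ f z Complex.I ^ 2 / (4 * f z)
    _ ≤ ∫ z, D z ∂γ := integral_mono_ae (h₁.add h₂) hD hsum_le
  · simpa only [he_apply, Complex.ofReal_one] using (hasDerivAt_id' x).ofReal_comp.add_const _
  · simpa only [he_apply, Complex.ofReal_one, one_mul] using
      ((hasDerivAt_id' y).ofReal_comp.mul_const Complex.I).const_add _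

/-- The `k`-th Taylor coefficient at the origin of an entire function. -/
noncomputable def taylorCoeff (F : ℂ → ℂ) (k : ℕ) : ℂ :=
  iteratedDeriv k F 0 / (k.factorial : ℂ)

theorem taylorCoeff_zero (F : ℂ → ℂ) : taylorCoeff F 0 = F 0 := by
  simp [taylorCoeff]

theorem hasSum_taylorCoeff {F : ℂ → ℂ} (hF : Differentiable ℂ F) (z : ℂ) :
    HasSum (fun k => taylorCoeff F k * z ^ k) (F z) := by
  have h := Complex.hasSum_taylorSeries_of_entire hF 0 z
  simp only [sub_zero, smul_eq_mul] at h
  exact h.congr_fun fun k => by rw [taylorCoeff]; ring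

theorem taylorCoeff_deriv (F : ℂ → ℂ) (k : ℕ) :
    taylorCoeff (deriv F) k = (k + 1) * taylorCoeff F (k + 1) := by
  have hk : (k.factorial : ℂ) ≠ 0 := mod_cast k.factorial_ne_zero
  have hk1 : (k + 1 : ℂ) ≠ 0 := mod_cast k.succ_ne_zero
  simp only [taylorCoeff, iteratedDeriv_succ', Nat.factorial_succ]
  push_cast
  field_simp

theorem hasSum_taylorCoeff_id_mul_deriv {F : ℂ → ℂ} (hF : Differentiable ℂ F) (z : ℂ) :
    HasSum (fun k => k * taylorCoeff F k * z ^ k) (z * deriv F z) := by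
  have h := (hasSum_taylorCoeff hF.deriv z).mul_left z
  refine (hasSum_nat_add_iff' 1).mp ?_
  simp only [Finset.sum_range_one, Nat.cast_zero, zero_mul, sub_zero]
  refine h.congr_fun fun k => ?_
  rw [taylorCoeff_deriv]
  push_cast
  ring

open Polynomial in
theorem circleAverage_norm_sq_sum_range (a : ℕ → ℂ) (n : ℕ) :
    Real.circleAverage (fun z => ‖∑ k ∈ Finset.range n, a k * z ^ k‖ ^ 2) 0 1 =
      ∑ k ∈ Finset.range n, ‖a k‖ ^ 2 := by
  set p : ℂ[X] := ∑ k ∈ Finset.range n, monomial k (a k) with hp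
  have hcoeff (k : ℕ) : p.coeff k = if k < n then a k else 0 := by
    simp [hp, finsetSum_coeff, coeff_monomial]
  have hsupp : p.support ⊆ Finset.range n := fun k hk => by
    by_contra hkn
    simp_all
  have heval (z : ℂ) : p.eval z = ∑ k ∈ Finset.range n, a k * z ^ k := by
    simp [hp, eval_finsetSum]
  simp only [← heval]
  rw [← p.sum_sq_norm_coeff_eq_circleAverage,
    Finset.sum_subset hsupp fun k _ hk => by simp [notMem_support_iff.mp hk]]
  exact Finset.sum_congr rfl fun k hk => by rw [hcoeff, if_pos (Finset.mem_range.mp hk)]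

theorem hasSum_norm_sq_circleAverage {a : ℕ → ℂ} {f : ℂ → ℂ} (ha : Summable fun k => ‖a k‖)
    (hf : ∀ z, ‖z‖ = 1 → HasSum (fun k => a k * z ^ k) (f z)) :
    HasSum (fun k => ‖a k‖ ^ 2) (Real.circleAverage (fun z => ‖f z‖ ^ 2) 0 1) := by
  rw [hasSum_iff_tendsto_nat_of_nonneg fun k => by positivity]
  simp only [← circleAverage_norm_sq_sum_range]
  refine Tendsto.const_smul (intervalIntegral.tendsto_integral_filter_of_dominated_convergence
    (fun _ => (∑' k, ‖a k‖) ^ 2) ?_ ?_ (by simp) ?_) _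
  · exact Eventually.of_forall fun n =>
      Continuous.aestronglyMeasurable (by simp only [circleMap]; fun_prop)
  · refine Eventually.of_forall fun n => ae_of_all _ fun θ _ => ?_
    rw [norm_pow, norm_norm]
    gcongr
    calc ‖∑ k ∈ Finset.range n, a k * circleMap 0 1 θ ^ k‖
        ≤ ∑ k ∈ Finset.range n, ‖a k‖ := (norm_sum_le _ _).trans_eq (by simp)
      _ ≤ ∑' k, ‖a k‖ := ha.sum_le_tsum _ fun k _ => norm_nonneg _
  · exact ae_of_all _ fun θ _ => ((hf _ (by simp)).tendsto_sum_nat.norm).pow 2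

/-- Measures on `ℂ` invariant under every rotation about the origin. The monomials `z ^ k` are
orthogonal in `L²` of such a measure. -/
def IsRotationInvariant (μ : Measure ℂ) : Prop :=
  ∀ c : Circle, MeasurePreserving (rotation c) μ μ

theorem isRotationInvariant_volume : IsRotationInvariant volume := fun c =>
  (rotation c).measurePreserving

theorem IsRotationInvariant.withDensity_norm {μ : Measure ℂ} (hμ : IsRotationInvariant μ)
    {w : ℝ → ℝ≥0∞} (hw : Measurable w) :
    IsRotationInvariant (μ.withDensity fun z => w ‖z‖) := fun c => by
  refine ⟨(hμ c).measurable, Measure.ext_of_lintegral _ fun g hg => ?_⟩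
  have hgc : Measurable fun z => g (rotation c z) := hg.comp (hμ c).measurable
  rw [lintegral_map hg (hμ c).measurable,
    lintegral_withDensity_eq_lintegral_mul _ (by fun_prop) hgc,
    lintegral_withDensity_eq_lintegral_mul _ (by fun_prop) hg,
    ← (hμ c).lintegral_comp (f := (fun z => w ‖z‖) * g) (by fun_prop)]
  simp only [Pi.mul_apply, LinearIsometryEquiv.norm_map]

theorem isRotationInvariant_complexGaussian : IsRotationInvariant γ :=
  isRotationInvariant_volume.withDensity_norm
    (w := fun r => ENNReal.ofReal (Real.pi⁻¹ * Real.exp (-r ^ 2))) (by fun_prop)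

theorem continuous_rotation_circleExp :
    Continuous fun p : ℝ × ℂ => rotation (Circle.exp p.1) p.2 := by
  simp only [rotation_apply]
  fun_prop

theorem circleAverage_comp_mul {E : Type*} [NormedAddCommGroup E] [NormedSpace ℝ E] (f : ℂ → E)
    (z : ℂ) : Real.circleAverage (fun w => f (w * z)) 0 1 =
      (2 * Real.pi)⁻¹ • ∫ θ in Ioc 0 (2 * Real.pi), f (rotation (Circle.exp θ) z) := by
  rw [Real.circleAverage_def, intervalIntegral.integral_of_le Real.two_pi_pos.le]
  simp [circleMap]

theorem integral_eq_apply_zero_of_isRotationInvariant {μ : Measure ℂ} [IsProbabilityMeasure μ]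
    (hμ : IsRotationInvariant μ) {F : ℂ → ℂ} (hF : Differentiable ℂ F) (hFi : Integrable F μ) :
    ∫ z, F z ∂μ = F 0 := by
  have hrot (c : Circle) : ∫ z, F (rotation c z) ∂μ = ∫ z, F z ∂μ :=
    (hμ c).integral_comp' (f := (rotation c).toMeasurableEquiv) F
  have hnorm (c : Circle) : ∫ z, ‖F (rotation c z)‖ ∂μ = ∫ z, ‖F z‖ ∂μ :=
    (hμ c).integral_comp' (f := (rotation c).toMeasurableEquiv) fun z => ‖F z‖
  have hint (c : Circle) : Integrable (fun z => F (rotation c z)) μ :=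
    (hμ c).integrable_comp_of_integrable hFi
  have hmean (z : ℂ) :
      (2 * Real.pi)⁻¹ • ∫ θ in Ioc 0 (2 * Real.pi), F (rotation (Circle.exp θ) z) = F 0 := by
    rw [← circleAverage_comp_mul]
    simpa using DiffContOnCl.circleAverage (f := fun w => F (w * z)) (c := 0) (R := 1)
      (by fun_prop : Differentiable ℂ fun w => F (w * z)).diffContOnCl
  have hprod : Integrable (Function.uncurry fun z θ => F (rotation (Circle.exp θ) z))
      (μ.prod (volume.restrict (Ioc 0 (2 * Real.pi)))) := by
    have hmeas : AEStronglyMeasurable (Function.uncurry fun z θ => F (rotation (Circle.exp θ) z))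
        (μ.prod (volume.restrict (Ioc 0 (2 * Real.pi)))) :=
      (hF.continuous.comp (continuous_rotation_circleExp.comp continuous_swap)).aestronglyMeasurable
    rw [integrable_prod_iff' hmeas]
    exact ⟨ae_of_all _ fun θ => hint (Circle.exp θ),
      (integrable_const _).congr (ae_of_all _ fun θ => (hnorm (Circle.exp θ)).symm)⟩
  calc ∫ z, F z ∂μ
      = (2 * Real.pi)⁻¹ • ∫ θ in Ioc 0 (2 * Real.pi), ∫ z, F (rotation (Circle.exp θ) z) ∂μ := by
        simp only [hrot, integral_const, smul_smul]
        simp [Real.pi_pos.le]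
        field
    _ = ∫ _, F 0 ∂μ := by
        rw [← integral_integral_swap hprod, ← integral_smul]
        simp only [hmean]
    _ = F 0 := by simp

theorem lintegral_norm_sq_comp_rotation_of_hasSum {F : ℂ → ℂ} (hF : Continuous F) {a : ℕ → ℂ}
    (ha : ∀ z, HasSum (fun k => a k * z ^ k) (F z)) (z : ℂ) :
    ∫⁻ θ in Ioc 0 (2 * Real.pi), ENNReal.ofReal (‖F (rotation (Circle.exp θ) z)‖ ^ 2) =
      ENNReal.ofReal (2 * Real.pi) *
        ∑' k, ENNReal.ofReal (‖a k‖ ^ 2) * ENNReal.ofReal (‖z‖ ^ (2 * k)) := by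
  have hsum := hasSum_norm_sq_circleAverage (f := fun w => F (w * z))
    (a := fun k => a k * z ^ k) (ha z).summable.norm fun w _ => by
      simpa only [mul_pow, mul_assoc, mul_comm] using ha (w * z)
  have hcts : Continuous fun θ => ‖F (rotation (Circle.exp θ) z)‖ ^ 2 := by
    simp only [rotation_apply]
    fun_prop
  have havg := circleAverage_comp_mul (fun w => ‖F w‖ ^ 2) z
  rw [← hsum.tsum_eq, smul_eq_mul, eq_inv_mul_iff_mul_eq₀ Real.two_pi_pos.ne'] at havg
  rw [← ofReal_integral_eq_lintegral_ofReal hcts.integrableOn_Ioc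
    (ae_of_all _ fun _ => by positivity), ← havg, ENNReal.ofReal_mul Real.two_pi_pos.le,
    ENNReal.ofReal_tsum_of_nonneg (fun _ => by positivity) hsum.summable]
  congr 2 with k
  rw [← ENNReal.ofReal_mul (by positivity), norm_mul, norm_pow, mul_pow, ← pow_mul, mul_comm k 2]

theorem lintegral_norm_sq_of_hasSum {μ : Measure ℂ} [SFinite μ] (hμ : IsRotationInvariant μ)
    {F : ℂ → ℂ} (hF : Continuous F) {a : ℕ → ℂ} (ha : ∀ z, HasSum (fun k => a k * z ^ k) (F z)) :
    ∫⁻ z, ENNReal.ofReal (‖F z‖ ^ 2) ∂μ =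
      ∑' k, ENNReal.ofReal (‖a k‖ ^ 2) * ∫⁻ z, ENNReal.ofReal (‖z‖ ^ (2 * k)) ∂μ := by
  have hpi : ENNReal.ofReal (2 * Real.pi) ≠ 0 := by simp [Real.pi_pos]
  have hrot (c : Circle) : ∫⁻ z, ENNReal.ofReal (‖F (rotation c z)‖ ^ 2) ∂μ =
      ∫⁻ z, ENNReal.ofReal (‖F z‖ ^ 2) ∂μ :=
    (hμ c).lintegral_comp (f := fun z => ENNReal.ofReal (‖F z‖ ^ 2)) (by fun_prop)
  have hmeas : Measurable fun p : ℝ × ℂ =>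
      ENNReal.ofReal (‖F (rotation (Circle.exp p.1) p.2)‖ ^ 2) :=
    ((hF.comp continuous_rotation_circleExp).norm.pow 2).measurable.ennreal_ofReal
  rw [← ENNReal.mul_right_inj hpi ENNReal.ofReal_ne_top]
  calc ENNReal.ofReal (2 * Real.pi) * ∫⁻ z, ENNReal.ofReal (‖F z‖ ^ 2) ∂μ
      = ∫⁻ θ in Ioc 0 (2 * Real.pi), ∫⁻ z,
          ENNReal.ofReal (‖F (rotation (Circle.exp θ) z)‖ ^ 2) ∂μ := by
        simp only [hrot, lintegral_const]
        simp [mul_comm]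
    _ = ∫⁻ z, ENNReal.ofReal (2 * Real.pi) *
          ∑' k, ENNReal.ofReal (‖a k‖ ^ 2) * ENNReal.ofReal (‖z‖ ^ (2 * k)) ∂μ := by
        rw [lintegral_lintegral_swap (f := fun θ z =>
          ENNReal.ofReal (‖F (rotation (Circle.exp θ) z)‖ ^ 2)) hmeas.aemeasurable]
        simp only [lintegral_norm_sq_comp_rotation_of_hasSum hF ha]
    _ = _ := by
        rw [lintegral_const_mul _ (by fun_prop), lintegral_tsum fun k => by fun_prop]
        congr! 3 with k
        exact lintegral_const_mul _ (by fun_prop)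

theorem integrable_and_integral_eq_tsum_of_lintegral {α : Type*} [MeasurableSpace α]
    {μ : Measure α} {f : α → ℝ} {a : ℕ → ℝ} (hf : AEStronglyMeasurable f μ) (hf0 : ∀ x, 0 ≤ f x)
    (ha0 : ∀ k, 0 ≤ a k) (h : ∫⁻ x, ENNReal.ofReal (f x) ∂μ = ∑' k, ENNReal.ofReal (a k)) :
    (Integrable f μ ↔ Summable a) ∧ ∫ x, f x ∂μ = ∑' k, a k := by
  constructor
  · rw [← lintegral_ofReal_ne_top_iff_integrable hf (ae_of_all _ hf0), h]
    exact (ENNReal.tsum_coe_ne_top_iff_summable (f := fun k => (a k).toNNReal)).trans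
      (by simp [← NNReal.summable_coe, ha0])
  · rw [integral_eq_lintegral_of_nonneg_ae (ae_of_all _ hf0) hf, h,
      ENNReal.tsum_toReal_eq fun _ => ENNReal.ofReal_ne_top]
    simp [ha0]

theorem integral_norm_pow_mul_exp_complexGaussian {N : ℝ} (hN : -1 < N) (k : ℕ) :
    ∫ z, ‖z‖ ^ (2 * k) * Real.exp (-N * ‖z‖ ^ 2) ∂γ = k.factorial / (N + 1) ^ (k + 1) := by
  have h := Complex.integral_rpow_mul_exp_neg_mul_rpow (p := 2) (q := 2 * k) (b := N + 1)
    one_le_two (by linarith [k.cast_nonneg (α := ℝ)]) (by linarith)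
  have hexp : -((2 * k : ℝ) + 2) / 2 = -(k + 1 : ℕ) := by push_cast; ring
  have hGamma : ((2 * k : ℝ) + 2) / 2 = k + 1 := by ring
  rw [hexp, hGamma, Real.Gamma_nat_eq_factorial, Real.rpow_neg (by linarith),
    Real.rpow_natCast] at h
  rw [integral_complexGaussian]
  calc ∫ z : ℂ, (Real.pi⁻¹ * Real.exp (-‖z‖ ^ 2)) • (‖z‖ ^ (2 * k) * Real.exp (-N * ‖z‖ ^ 2))
      = Real.pi⁻¹ * ∫ z : ℂ, ‖z‖ ^ (2 * k : ℝ) * Real.exp (-(N + 1) * ‖z‖ ^ (2 : ℝ)) := by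
        rw [← integral_const_mul]
        congr with z
        rw [show -(N + 1) * ‖z‖ ^ (2 : ℝ) = -‖z‖ ^ 2 + -N * ‖z‖ ^ 2 by norm_cast; ring,
          Real.exp_add, smul_eq_mul]
        norm_cast
        ring
    _ = _ := by
        rw [h]
        field

theorem lintegral_norm_pow_mul_exp_complexGaussian {N : ℝ} (hN : -1 < N) (k : ℕ) :
    ∫⁻ z, ENNReal.ofReal (‖z‖ ^ (2 * k) * Real.exp (-N * ‖z‖ ^ 2)) ∂γ =
      ENNReal.ofReal (k.factorial / (N + 1) ^ (k + 1)) := by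
  have hN1 : 0 < N + 1 := by linarith
  have h := integral_norm_pow_mul_exp_complexGaussian hN k
  rw [← ofReal_integral_eq_lintegral_ofReal _ (ae_of_all _ fun _ => by positivity), h]
  refine .of_integral_ne_zero ?_
  rw [h]
  positivity

theorem lintegral_norm_sq_mul_exp_of_hasSum {N : ℝ} (hN : -1 < N) (m : ℕ) {F : ℂ → ℂ}
    (hF : Continuous F) {a : ℕ → ℂ} (ha : ∀ z, HasSum (fun k => a k * z ^ k) (F z)) :
    ∫⁻ z, ENNReal.ofReal (‖z‖ ^ (2 * m) * ‖F z‖ ^ 2 * Real.exp (-N * ‖z‖ ^ 2)) ∂γ =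
      ∑' k, ENNReal.ofReal (‖a k‖ ^ 2 * ((k + m).factorial / (N + 1) ^ (k + m + 1))) := by
  let w : ℝ → ℝ≥0∞ := fun r => ENNReal.ofReal (r ^ (2 * m) * Real.exp (-N * r ^ 2))
  have hw : Measurable w := by fun_prop
  have h := lintegral_norm_sq_of_hasSum
    (isRotationInvariant_complexGaussian.withDensity_norm hw) hF ha
  have hden {g : ℂ → ℝ} (hg : Measurable g) :
      ∫⁻ z, ENNReal.ofReal (g z) ∂(γ).withDensity (fun z => w ‖z‖) =
        ∫⁻ z, ENNReal.ofReal (‖z‖ ^ (2 * m) * g z * Real.exp (-N * ‖z‖ ^ 2)) ∂γ := by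
    rw [lintegral_withDensity_eq_lintegral_mul _ (by fun_prop) (by fun_prop)]
    refine lintegral_congr fun z => ?_
    rw [Pi.mul_apply, ← ENNReal.ofReal_mul (by positivity)]
    congr 1
    ring
  rw [hden (by fun_prop)] at h
  rw [h]
  congr with k
  rw [hden (by fun_prop), ENNReal.ofReal_mul (by positivity),
    ← lintegral_norm_pow_mul_exp_complexGaussian hN]
  refine congrArg _ (lintegral_congr fun _ => congrArg _ ?_)
  ring

section Parseval

variable {N : ℝ} {m : ℕ} {F : ℂ → ℂ} {a : ℕ → ℂ}

theorem integrable_norm_sq_mul_exp_iff (hN : -1 < N) (hF : Continuous F)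
    (ha : ∀ z, HasSum (fun k => a k * z ^ k) (F z)) :
    Integrable (fun z => ‖z‖ ^ (2 * m) * ‖F z‖ ^ 2 * Real.exp (-N * ‖z‖ ^ 2)) γ ↔
      Summable fun k => ‖a k‖ ^ 2 * ((k + m).factorial / (N + 1) ^ (k + m + 1)) := by
  have hN1 : 0 < N + 1 := by linarith
  exact (integrable_and_integral_eq_tsum_of_lintegral (by fun_prop) (fun _ => by positivity)
    (fun _ => by positivity) (lintegral_norm_sq_mul_exp_of_hasSum hN m hF ha)).1

theorem hasSum_integral_norm_sq_mul_exp (hN : -1 < N) (hF : Continuous F)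
    (ha : ∀ z, HasSum (fun k => a k * z ^ k) (F z))
    (hi : Integrable (fun z => ‖z‖ ^ (2 * m) * ‖F z‖ ^ 2 * Real.exp (-N * ‖z‖ ^ 2)) γ) :
    HasSum (fun k => ‖a k‖ ^ 2 * ((k + m).factorial / (N + 1) ^ (k + m + 1)))
      (∫ z, ‖z‖ ^ (2 * m) * ‖F z‖ ^ 2 * Real.exp (-N * ‖z‖ ^ 2) ∂γ) := by
  have hN1 : 0 < N + 1 := by linarith
  rw [(integrable_and_integral_eq_tsum_of_lintegral (by fun_prop) (fun _ => by positivity)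
    (fun _ => by positivity) (lintegral_norm_sq_mul_exp_of_hasSum hN m hF ha)).2]
  exact ((integrable_norm_sq_mul_exp_iff hN hF ha).mp hi).hasSum

end Parseval

/-- The Fock–Sobolev space: entire functions `F` with both `F` and `F'` in `L²(γ)`. These are the
functions for which both sides of the logarithmic Sobolev inequality are finite. -/
structure FockSobolev (F : ℂ → ℂ) : Prop where
  differentiable : Differentiable ℂ F
  integrable_norm_sq : Integrable (fun z => ‖F z‖ ^ 2) γ
  integrable_norm_sq_deriv : Integrable (fun z => ‖deriv F z‖ ^ 2) γ

theorem hasSum_integral_norm_sq {F : ℂ → ℂ} (hF : Differentiable ℂ F)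
    (hi : Integrable (fun z => ‖F z‖ ^ 2) γ) :
    HasSum (fun k => ‖taylorCoeff F k‖ ^ 2 * k.factorial) (∫ z, ‖F z‖ ^ 2 ∂γ) := by
  simpa using hasSum_integral_norm_sq_mul_exp (N := 0) (m := 0) (by norm_num) hF.continuous
    (hasSum_taylorCoeff hF) (by simpa using hi)

theorem norm_apply_zero_sq_le_integral {F : ℂ → ℂ} (hF : Differentiable ℂ F)
    (hi : Integrable (fun z => ‖F z‖ ^ 2) γ) : ‖F 0‖ ^ 2 ≤ ∫ z, ‖F z‖ ^ 2 ∂γ := by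
  simpa [taylorCoeff_zero] using
    le_hasSum (hasSum_integral_norm_sq hF hi) 0 fun k _ => by positivity

namespace FockSobolev

variable {F : ℂ → ℂ}

theorem hasSum_integral_norm_sq_deriv (hF : FockSobolev F) :
    HasSum (fun k => k * (‖taylorCoeff F k‖ ^ 2 * k.factorial)) (∫ z, ‖deriv F z‖ ^ 2 ∂γ) := by
  refine (hasSum_nat_add_iff' 1).mp ?_
  simp only [Finset.sum_range_one, Nat.cast_zero, zero_mul, sub_zero]
  refine (hasSum_integral_norm_sq hF.differentiable.deriv
    hF.integrable_norm_sq_deriv).congr_fun fun k => ?_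
  rw [taylorCoeff_deriv, Nat.factorial_succ, norm_mul, ← Nat.cast_succ, Complex.norm_natCast]
  push_cast
  ring

theorem hasSum_norm_sq_taylorCoeff_mul_factorial_succ (hF : FockSobolev F) :
    HasSum (fun k => ‖taylorCoeff F k‖ ^ 2 * (k + 1).factorial)
      (∫ z, ‖deriv F z‖ ^ 2 ∂γ + ∫ z, ‖F z‖ ^ 2 ∂γ) := by
  refine (hF.hasSum_integral_norm_sq_deriv.add
    (hasSum_integral_norm_sq hF.differentiable hF.integrable_norm_sq)).congr_fun fun k => ?_
  rw [Nat.factorial_succ]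
  push_cast
  ring

theorem integrable_norm_id_mul_sq (hF : FockSobolev F) :
    Integrable (fun z => ‖z‖ ^ 2 * ‖F z‖ ^ 2) γ := by
  simpa using (integrable_norm_sq_mul_exp_iff (N := 0) (m := 1) (by norm_num)
    hF.differentiable.continuous (hasSum_taylorCoeff hF.differentiable)).mpr
      (by simpa using hF.hasSum_norm_sq_taylorCoeff_mul_factorial_succ.summable)

theorem integral_norm_id_mul_sq (hF : FockSobolev F) :
    ∫ z, ‖z‖ ^ 2 * ‖F z‖ ^ 2 ∂γ = ∫ z, ‖deriv F z‖ ^ 2 ∂γ + ∫ z, ‖F z‖ ^ 2 ∂γ := by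
  have h := hasSum_integral_norm_sq_mul_exp (N := 0) (m := 1) (by norm_num)
    hF.differentiable.continuous (hasSum_taylorCoeff hF.differentiable)
    (by simpa using hF.integrable_norm_id_mul_sq)
  simp only [mul_one, neg_zero, zero_mul, Real.exp_zero, zero_add, one_pow, div_one] at h
  exact h.unique hF.hasSum_norm_sq_taylorCoeff_mul_factorial_succ

end FockSobolev

/-- The Weyl translation by `ξ`, a unitary operator on the Fock space which translates the Husimi
function. -/
noncomputable def weyl (ξ : ℂ) (F : ℂ → ℂ) (z : ℂ) : ℂ :=
  F (z + ξ) * Complex.exp (-(z * conj ξ) - ((‖ξ‖ ^ 2 / 2 : ℝ) : ℂ))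

/-- The Husimi function `|F(z)|² e^{-|z|²}` of `F`, whose maximum measures how close `F` is to the
coherent states. -/
noncomputable def husimi (F : ℂ → ℂ) (z : ℂ) : ℝ :=
  ‖F z‖ ^ 2 * Real.exp (-‖z‖ ^ 2)

section Weyl

variable {F : ℂ → ℂ} (ξ : ℂ)

theorem norm_sq_weyl (F : ℂ → ℂ) (z : ℂ) :
    ‖weyl ξ F z‖ ^ 2 = ‖F (z + ξ)‖ ^ 2 * Real.exp (‖z‖ ^ 2 - ‖z + ξ‖ ^ 2) := by
  rw [weyl, norm_mul, Complex.norm_exp, mul_pow, ← Real.exp_nat_mul]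
  congr 2
  simp only [Complex.sq_norm, Complex.normSq_apply, Complex.sub_re, Complex.neg_re, Complex.mul_re,
    Complex.conj_re, Complex.conj_im, Complex.ofReal_re, Complex.add_re, Complex.add_im]
  push_cast
  ring

theorem husimi_weyl (F : ℂ → ℂ) (z : ℂ) : husimi (weyl ξ F) z = husimi F (z + ξ) := by
  rw [husimi, husimi, norm_sq_weyl, mul_assoc, ← Real.exp_add]
  congr 2
  ring

theorem exp_smul_norm_sq_weyl_mul (F : ℂ → ℂ) (h : ℂ → ℝ) (z : ℂ) :
    Real.exp (-‖z‖ ^ 2) • (‖weyl ξ F z‖ ^ 2 * h (z + ξ)) =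
      Real.exp (-‖z + ξ‖ ^ 2) • (‖F (z + ξ)‖ ^ 2 * h (z + ξ)) := by
  have := husimi_weyl ξ F z
  simp only [husimi] at this
  rw [smul_eq_mul, smul_eq_mul]
  linear_combination h (z + ξ) * this

theorem integral_norm_sq_weyl_mul (F : ℂ → ℂ) (h : ℂ → ℝ) :
    ∫ z, ‖weyl ξ F z‖ ^ 2 * h (z + ξ) ∂γ = ∫ z, ‖F z‖ ^ 2 * h z ∂γ := by
  simp only [integral_complexGaussian, mul_smul, exp_smul_norm_sq_weyl_mul]
  exact integral_add_right_eq_self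
    (fun z => Real.pi⁻¹ • Real.exp (-‖z‖ ^ 2) • (‖F z‖ ^ 2 * h z)) ξ

theorem integral_norm_sq_weyl (F : ℂ → ℂ) :
    ∫ z, ‖weyl ξ F z‖ ^ 2 ∂γ = ∫ z, ‖F z‖ ^ 2 ∂γ := by
  simpa using integral_norm_sq_weyl_mul ξ F 1

theorem integrable_norm_sq_weyl (hF : Integrable (fun z => ‖F z‖ ^ 2) γ) :
    Integrable (fun z => ‖weyl ξ F z‖ ^ 2) γ := by
  have h := exp_smul_norm_sq_weyl_mul ξ F 1
  simp only [Pi.one_apply, mul_one] at h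
  rw [integrable_complexGaussian_iff] at hF ⊢
  simp only [h]
  exact hF.comp_add_right ξ

theorem hasDerivAt_weyl (hF : Differentiable ℂ F) (z : ℂ) :
    HasDerivAt (weyl ξ F) (weyl ξ (fun w => deriv F w - conj ξ * F w) z) z := by
  have hexp : HasDerivAt (fun z => Complex.exp (-(z * conj ξ) - ((‖ξ‖ ^ 2 / 2 : ℝ) : ℂ))) _ z :=
    ((((hasDerivAt_id z).mul_const (conj ξ)).fun_neg).sub_const _).cexp
  refine (((hF (z + ξ)).hasDerivAt.comp_add_const z ξ).fun_mul hexp).congr_deriv ?_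
  simp only [weyl, id]
  ring

theorem fockSobolev_weyl (hF : FockSobolev F) : FockSobolev (weyl ξ F) where
  differentiable z := (hasDerivAt_weyl ξ hF.differentiable z).differentiableAt
  integrable_norm_sq := integrable_norm_sq_weyl ξ hF.integrable_norm_sq
  integrable_norm_sq_deriv := by
    simp only [(hasDerivAt_weyl ξ hF.differentiable _).deriv]
    refine integrable_norm_sq_weyl ξ ?_
    have hcont := hF.differentiable.continuous
    have hcont' := hF.differentiable.deriv.continuous
    refine ((hF.integrable_norm_sq_deriv.const_mul 2).add
      (hF.integrable_norm_sq.const_mul (2 * ‖ξ‖ ^ 2))).mono' (by fun_prop) (ae_of_all _ fun z => ?_)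
    have h := norm_sub_le (deriv F z) (conj ξ * F z)
    rw [norm_mul, RCLike.norm_conj] at h
    rw [norm_pow, norm_norm, Pi.add_apply]
    calc ‖deriv F z - conj ξ * F z‖ ^ 2 ≤ (‖deriv F z‖ + ‖ξ‖ * ‖F z‖) ^ 2 := by gcongr
      _ ≤ 2 * ‖deriv F z‖ ^ 2 + 2 * ‖ξ‖ ^ 2 * ‖F z‖ ^ 2 := by
        linarith [sq_nonneg (‖deriv F z‖ - ‖ξ‖ * ‖F z‖)]

theorem husimi_le_integral (hF : Differentiable ℂ F) (hi : Integrable (fun z => ‖F z‖ ^ 2) γ)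
    (z : ℂ) : husimi F z ≤ ∫ z, ‖F z‖ ^ 2 ∂γ := by
  calc husimi F z = ‖weyl z F 0‖ ^ 2 := by simpa [husimi] using (husimi_weyl z F 0).symm
    _ ≤ ∫ w, ‖weyl z F w‖ ^ 2 ∂γ := norm_apply_zero_sq_le_integral
      (fun w => (hasDerivAt_weyl z hF w).differentiableAt) (integrable_norm_sq_weyl z hi)
    _ = ∫ w, ‖F w‖ ^ 2 ∂γ := integral_norm_sq_weyl z F

end Weyl

theorem FockSobolev.exists_forall_husimi_le {F : ℂ → ℂ} (hF : FockSobolev F) :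
    ∃ ξ, ∀ z, husimi F z ≤ husimi F ξ := by
  have hcont := hF.differentiable.continuous
  have hcts : Continuous (husimi F) := by unfold husimi; fun_prop
  by_cases! h0 : ∀ z, husimi F z ≤ 0
  · exact ⟨0, fun z => (h0 z).trans (by unfold husimi; positivity)⟩
  obtain ⟨z₀, hz₀⟩ := h0
  refine hcts.exists_forall_ge' z₀ ?_
  have hdecay (z : ℂ) : ‖z‖ ^ 2 * husimi F z ≤ ∫ z, ‖z‖ ^ 2 * ‖F z‖ ^ 2 ∂γ := by
    have h := husimi_le_integral (F := fun z => z * F z)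
      (differentiable_id.fun_mul hF.differentiable)
      (by simpa [mul_pow] using hF.integrable_norm_id_mul_sq) z
    simpa [husimi, mul_pow, mul_assoc] using h
  have hlarge : ∀ᶠ z in cocompact ℂ, (∫ z, ‖z‖ ^ 2 * ‖F z‖ ^ 2 ∂γ) / husimi F z₀ < ‖z‖ ^ 2 :=
    ((tendsto_pow_atTop two_ne_zero).comp tendsto_norm_cocompact_atTop).eventually_gt_atTop _
  filter_upwards [hlarge] with z hz
  rw [div_lt_iff₀ hz₀] at hz
  by_contra! hlt
  exact absurd (hdecay z) (not_le.mpr (hz.trans_le (by gcongr)))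

/-- The deficit in the Gaussian logarithmic Sobolev inequality for a normalized entire function. -/
noncomputable def logSobolevDeficit (F : ℂ → ℂ) : ℝ :=
  ∫ z, ‖deriv F z‖ ^ 2 ∂γ - ∫ z, ‖F z‖ ^ 2 * Real.log (‖F z‖ ^ 2) ∂γ

theorem norm_sq_mul_log_husimi (F : ℂ → ℂ) (z : ℂ) :
    ‖F z‖ ^ 2 * Real.log (husimi F z) =
      ‖F z‖ ^ 2 * Real.log (‖F z‖ ^ 2) - ‖z‖ ^ 2 * ‖F z‖ ^ 2 := by
  rcases eq_or_ne (F z) 0 with h | h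
  · simp [h]
  · rw [husimi, Real.log_mul (by positivity) (Real.exp_ne_zero _), Real.log_exp]
    ring

namespace FockSobolev

variable {F : ℂ → ℂ}

theorem integrable_norm_sq_mul_log (hF : FockSobolev F) (hF1 : ∫ z, ‖F z‖ ^ 2 ∂γ = 1) :
    Integrable (fun z => ‖F z‖ ^ 2 * Real.log (‖F z‖ ^ 2)) γ := by
  have hcont := hF.differentiable.continuous
  refine (hF.integrable_norm_id_mul_sq.add (integrable_const 1)).mono'
    (Continuous.aestronglyMeasurable (Real.continuous_mul_log.comp (by fun_prop)))
    (ae_of_all _ fun z => ?_)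
  have hlog : ‖F z‖ ^ 2 * Real.log (husimi F z) ≤ 0 :=
    mul_nonpos_of_nonneg_of_nonpos (by positivity) (Real.log_nonpos (by unfold husimi; positivity)
      (hF1 ▸ husimi_le_integral hF.differentiable hF.integrable_norm_sq z))
  rw [norm_sq_mul_log_husimi] at hlog
  have hneg := Real.self_sub_one_le_mul_log (sq_nonneg ‖F z‖)
  have hpos : 0 ≤ ‖z‖ ^ 2 * ‖F z‖ ^ 2 := by positivity
  have hpos' := sq_nonneg ‖F z‖
  rw [Real.norm_eq_abs, Pi.add_apply, abs_le]
  constructor <;> linarith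

theorem logSobolevDeficit_eq (hF : FockSobolev F) (hF1 : ∫ z, ‖F z‖ ^ 2 ∂γ = 1) :
    logSobolevDeficit F = -∫ z, ‖F z‖ ^ 2 * Real.log (husimi F z) ∂γ - 1 := by
  simp only [norm_sq_mul_log_husimi]
  rw [integral_sub (hF.integrable_norm_sq_mul_log hF1) hF.integrable_norm_id_mul_sq,
    hF.integral_norm_id_mul_sq, hF1, logSobolevDeficit]
  ring

theorem logSobolevDeficit_weyl (hF : FockSobolev F) (hF1 : ∫ z, ‖F z‖ ^ 2 ∂γ = 1) (ξ : ℂ) :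
    logSobolevDeficit (weyl ξ F) = logSobolevDeficit F := by
  rw [(fockSobolev_weyl ξ hF).logSobolevDeficit_eq ((integral_norm_sq_weyl ξ F).trans hF1),
    hF.logSobolevDeficit_eq hF1]
  simp only [husimi_weyl, integral_norm_sq_weyl_mul ξ F fun z => Real.log (husimi F z)]

end FockSobolev

theorem countable_setOf_eq_zero {F : ℂ → ℂ} (hF : Differentiable ℂ F) {z₀ : ℂ} (h : F z₀ ≠ 0) :
    {z | F z = 0}.Countable := by
  have hcodisc := hF.differentiableOn.analyticOnNhd isOpen_univ |>.preimage_zero_mem_codiscrete h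
  have : DiscreteTopology {z | F z = 0} :=
    (compl_mem_codiscrete_iff (S := {z | F z = 0}).mp hcodisc).2.to_subtype
  exact countable_of_Lindelof_of_discrete

/-- Normalized functions whose Husimi function is maximal at the origin. Every normalized function
can be brought to this position by a Weyl translation. -/
structure IsCentered (G : ℂ → ℂ) : Prop extends FockSobolev G where
  integral_norm_sq : ∫ z, ‖G z‖ ^ 2 ∂γ = 1
  husimi_le : ∀ z, husimi G z ≤ ‖G 0‖ ^ 2

theorem FockSobolev.exists_isCentered_weyl {F : ℂ → ℂ} (hF : FockSobolev F)
    (hF1 : ∫ z, ‖F z‖ ^ 2 ∂γ = 1) : ∃ ξ, IsCentered (weyl ξ F) := by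
  obtain ⟨ξ, hξ⟩ := hF.exists_forall_husimi_le
  refine ⟨ξ, fockSobolev_weyl ξ hF, (integral_norm_sq_weyl ξ F).trans hF1, fun z => ?_⟩
  calc husimi (weyl ξ F) z = husimi F (z + ξ) := husimi_weyl ξ F z
    _ ≤ husimi F (0 + ξ) := (hξ _).trans_eq (by rw [zero_add])
    _ = ‖weyl ξ F 0‖ ^ 2 := by rw [← husimi_weyl]; simp [husimi]

namespace IsCentered

variable {G : ℂ → ℂ}

theorem norm_sq_le (hG : IsCentered G) (z : ℂ) : ‖G z‖ ^ 2 ≤ ‖G 0‖ ^ 2 * Real.exp (‖z‖ ^ 2) := by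
  have h := hG.husimi_le z
  rwa [husimi, Real.exp_neg, ← div_eq_mul_inv, div_le_iff₀ (Real.exp_pos _)] at h

theorem apply_zero_ne_zero (hG : IsCentered G) : G 0 ≠ 0 := fun h0 => by
  have h (z : ℂ) : ‖G z‖ ^ 2 = 0 :=
    le_antisymm (by simpa [h0] using hG.norm_sq_le z) (sq_nonneg _)
  simpa [h] using hG.integral_norm_sq

theorem norm_apply_zero_sq_le_one (hG : IsCentered G) : ‖G 0‖ ^ 2 ≤ 1 :=
  hG.integral_norm_sq ▸ norm_apply_zero_sq_le_integral hG.differentiable hG.integrable_norm_sq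

theorem deriv_zero (hG : IsCentered G) : deriv G 0 = 0 := by
  set u : ℂ := G 0 * conj (deriv G 0) with hu
  have hline : HasDerivAt (fun t : ℝ => (t : ℂ) * u) u 0 := by
    simpa using (Complex.ofRealCLM.hasDerivAt (x := 0)).mul_const u
  have hmax : IsLocalMax (fun t : ℝ => husimi G (t * u)) 0 :=
    Eventually.of_forall fun t => (hG.husimi_le _).trans_eq (by simp [husimi])
  have hGu : HasDerivAt (fun t : ℝ => G (t * u)) (deriv G 0 * u) 0 := by
    have hG0 : HasDerivAt G (deriv G 0) (((0 : ℝ) : ℂ) * u) := by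
      simpa using (hG.differentiable 0).hasDerivAt
    exact hG0.comp (0 : ℝ) hline
  have hd := hGu.norm_sq.mul hline.norm_sq.fun_neg.exp
  have h0 := hmax.hasDerivAt_eq_zero hd
  have hinner : inner ℝ (G 0) (deriv G 0 * u) = ‖deriv G 0‖ ^ 2 * ‖G 0‖ ^ 2 := by
    rw [← real_inner_self_eq_norm_sq (G 0), ← real_inner_smul_right, hu, Complex.real_smul,
      Complex.ofReal_pow, ← Complex.mul_conj']
    ring_nf
  simpa [-Complex.inner, hinner, hG.apply_zero_ne_zero] using h0

end IsCentered

theorem fderiv_norm_sq_mul_one_sub_exp {G : ℂ → ℂ} (hG : Differentiable ℂ G) (ε N : ℝ) (z v : ℂ) :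
    fderiv ℝ (fun z => ‖G z‖ ^ 2 * (1 - ε * Real.exp (-N * ‖z‖ ^ 2))) z v =
      2 * (1 - ε * Real.exp (-N * ‖z‖ ^ 2)) * inner ℝ (G z) (deriv G z * v) +
        2 * (ε * N * Real.exp (-N * ‖z‖ ^ 2)) * ‖G z‖ ^ 2 * inner ℝ z v := by
  have hg := (hG z).hasDerivAt.complexToReal_fderiv.norm_sq
  have hw := ((((hasFDerivAt_id (𝕜 := ℝ) z).norm_sq.const_mul (-N)).exp.const_mul ε).const_sub 1)
  refine (congrArg (· v) (hg.fun_mul hw).fderiv).trans ?_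
  simp only [id, add_apply, smul_apply, smul_eq_mul, neg_apply,
    ContinuousLinearMap.comp_apply, innerSL_apply_apply, one_apply_eq_self,
    ContinuousLinearMap.id_apply, nsmul_eq_mul]
  push_cast
  ring

theorem fderiv_sq_add_fderiv_sq_norm_sq_mul_one_sub_exp {G : ℂ → ℂ} (hG : Differentiable ℂ G)
    (ε N : ℝ) (z : ℂ) :
    fderiv ℝ (fun z => ‖G z‖ ^ 2 * (1 - ε * Real.exp (-N * ‖z‖ ^ 2))) z 1 ^ 2 +
        fderiv ℝ (fun z => ‖G z‖ ^ 2 * (1 - ε * Real.exp (-N * ‖z‖ ^ 2))) z Complex.I ^ 2 =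
      4 * ‖G z‖ ^ 2 * ((1 - ε * Real.exp (-N * ‖z‖ ^ 2)) ^ 2 * ‖deriv G z‖ ^ 2 +
        2 * (1 - ε * Real.exp (-N * ‖z‖ ^ 2)) * (ε * N * Real.exp (-N * ‖z‖ ^ 2)) *
          inner ℝ (G z) (z * deriv G z) +
        (ε * N * Real.exp (-N * ‖z‖ ^ 2)) ^ 2 * (‖z‖ ^ 2 * ‖G z‖ ^ 2)) := by
  rw [fderiv_norm_sq_mul_one_sub_exp hG, fderiv_norm_sq_mul_one_sub_exp hG]
  generalize 1 - ε * Real.exp (-N * ‖z‖ ^ 2) = ρ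
  generalize ε * N * Real.exp (-N * ‖z‖ ^ 2) = c
  simp only [Complex.inner, Complex.sq_norm, Complex.normSq_apply, Complex.mul_re, Complex.mul_im,
    Complex.conj_re, Complex.conj_im, Complex.I_re, Complex.I_im, Complex.one_re, Complex.one_im]
  ring

section Perturbation

variable {α : Type*} [MeasurableSpace α] {μ : Measure α} {g w : α → ℝ} {ε : ℝ}

theorem mul_mul_log_mul (a b : ℝ) :
    a * b * Real.log (a * b) = b * (a * Real.log a) + b * Real.log b * a := by
  rcases eq_or_ne a 0 with rfl | ha
  · simp
  rcases eq_or_ne b 0 with rfl | hb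
  · simp
  rw [Real.log_mul ha hb]
  ring

theorem mul_log_le_mul_sub_one {t : ℝ} (ht : 0 ≤ t) : t * Real.log t ≤ t * (t - 1) := by
  rcases ht.eq_or_lt with rfl | ht
  · simp
  · exact mul_le_mul_of_nonneg_left (Real.log_le_sub_one_of_pos ht) ht.le

theorem integrable_mul_of_le_one {f : α → ℝ} (hf : Integrable f μ) (hw : AEStronglyMeasurable w μ)
    (hw0 : ∀ x, 0 ≤ w x) (hw1 : ∀ x, w x ≤ 1) : Integrable (fun x => w x * f x) μ :=
  hf.bdd_mul hw (ae_of_all _ fun x => by rw [Real.norm_of_nonneg (hw0 x)]; exact hw1 x)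

theorem one_sub_mul_mem_Icc {w ε : ℝ} (hw : w ∈ Icc 0 1) (hε : ε ∈ Icc 0 1) :
    1 - ε * w ∈ Icc 0 1 :=
  ⟨sub_nonneg.mpr (mul_le_one₀ hε.2 hw.1 hw.2), sub_le_self _ (mul_nonneg hε.1 hw.1)⟩

variable (hw : AEStronglyMeasurable w μ) (hw01 : ∀ x, w x ∈ Icc 0 1)
include hw hw01

theorem integrable_mul_log_mul (hg : Integrable g μ)
    (hlog : Integrable (fun x => g x * Real.log (g x)) μ) :
    Integrable (fun x => g x * w x * Real.log (g x * w x)) μ := by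
  simp only [mul_mul_log_mul]
  refine (integrable_mul_of_le_one hlog hw (hw01 · |>.1) (hw01 · |>.2)).add
    (hg.bdd_mul (c := 1) (Real.continuous_mul_log.comp_aestronglyMeasurable hw)
      (ae_of_all _ fun x => ?_))
  rw [Real.norm_eq_abs, abs_le]
  exact ⟨by linarith [Real.self_sub_one_le_mul_log (hw01 x).1, (hw01 x).1],
    (Real.mul_log_nonpos (hw01 x).1 (hw01 x).2).trans zero_le_one⟩

theorem le_entropy_mul_one_sub (hg0 : ∀ x, 0 ≤ g x) (hg : Integrable g μ) (hg1 : ∫ x, g x ∂μ = 1)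
    (hlog : Integrable (fun x => g x * Real.log (g x)) μ) (hε : ε ∈ Icc 0 1) :
    ∫ x, g x * Real.log (g x) ∂μ - ε * ∫ x, w x * (g x * Real.log (g x)) ∂μ -
        ε ^ 2 * (∫ x, w x * g x ∂μ) ^ 2 ≤ entropy μ fun x => g x * (1 - ε * w x) := by
  have hρ (x : α) := one_sub_mul_mem_Icc (hw01 x) hε
  have hwg := integrable_mul_of_le_one hg hw (hw01 · |>.1) (hw01 · |>.2)
  have hwlog := integrable_mul_of_le_one hlog hw (hw01 · |>.1) (hw01 · |>.2)
  have hpoint (x : α) : g x * Real.log (g x) - ε * (w x * (g x * Real.log (g x))) - ε * (w x * g x)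
      ≤ g x * (1 - ε * w x) * Real.log (g x * (1 - ε * w x)) := by
    rw [mul_mul_log_mul]
    linarith [mul_le_mul_of_nonneg_right (Real.self_sub_one_le_mul_log (hρ x).1) (hg0 x)]
  have hint := integral_mono ((hlog.sub (hwlog.const_mul ε)).sub (hwg.const_mul ε))
    (integrable_mul_log_mul (w := fun x => 1 - ε * w x)
      (aestronglyMeasurable_const.sub (hw.const_mul ε)) hρ hg hlog) hpoint
  rw [integral_sub' (hlog.sub (hwlog.const_mul ε)) (hwg.const_mul ε),
    integral_sub' hlog (hwlog.const_mul ε), integral_const_mul, integral_const_mul] at hint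
  have hmass : ∫ x, g x * (1 - ε * w x) ∂μ = 1 - ε * ∫ x, w x * g x ∂μ := by
    have hsplit (x : α) : g x * (1 - ε * w x) = g x - ε * (w x * g x) := by ring
    simp only [hsplit]
    rw [integral_sub hg (hwg.const_mul ε), integral_const_mul, hg1]
  have hmass0 : 0 ≤ 1 - ε * ∫ x, w x * g x ∂μ :=
    hmass ▸ integral_nonneg fun x => mul_nonneg (hg0 x) (hρ x).1
  have hmasslog := mul_log_le_mul_sub_one hmass0
  rw [entropy, hmass]
  linarith

end Perturbation

theorem exp_neg_mul_norm_sq_mem_Icc {N : ℝ} (hN : 0 ≤ N) (z : ℂ) :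
    Real.exp (-N * ‖z‖ ^ 2) ∈ Icc 0 1 :=
  ⟨(Real.exp_pos _).le, Real.exp_le_one_iff.mpr (by nlinarith [sq_nonneg ‖z‖])⟩

theorem integrable_exp_mul {N : ℝ} (hN : 0 ≤ N) {f : ℂ → ℝ} (hf : Integrable f γ) :
    Integrable (fun z => Real.exp (-N * ‖z‖ ^ 2) * f z) γ :=
  integrable_mul_of_le_one hf (by fun_prop) (exp_neg_mul_norm_sq_mem_Icc hN · |>.1)
    (exp_neg_mul_norm_sq_mem_Icc hN · |>.2)

theorem sq_mul_add_le {ρ A Y : ℝ} (hρ : 1 / 2 ≤ ρ) (hρ1 : ρ ≤ 1) (hA : 0 ≤ A) (hY : 0 ≤ Y)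
    (c B : ℝ) : ρ ^ 2 * A + 2 * ρ * c * B + c ^ 2 * Y ≤ ρ * (A + 2 * c * B + 2 * c ^ 2 * Y) := by
  have hA' : ρ ^ 2 * A ≤ ρ * A := mul_le_mul_of_nonneg_right (by nlinarith) hA
  have hY' : 1 * (c ^ 2 * Y) ≤ 2 * ρ * (c ^ 2 * Y) :=
    mul_le_mul_of_nonneg_right (by linarith) (by positivity)
  linarith

namespace FockSobolev

variable {G : ℂ → ℂ} (hG : FockSobolev G)
include hG

theorem integrable_inner_id_mul_deriv : Integrable (fun z => inner ℝ (G z) (z * deriv G z)) γ := by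
  have hcont := hG.differentiable.continuous
  have hcont' := hG.differentiable.deriv.continuous
  refine (hG.integrable_norm_id_mul_sq.add hG.integrable_norm_sq_deriv).mono'
    (Continuous.aestronglyMeasurable (by fun_prop)) (ae_of_all _ fun z => ?_)
  calc ‖inner ℝ (G z) (z * deriv G z)‖ ≤ ‖G z‖ * ‖z * deriv G z‖ := norm_inner_le_norm _ _
    _ = ‖z‖ * ‖G z‖ * ‖deriv G z‖ := by rw [norm_mul]; ring
    _ ≤ ‖z‖ ^ 2 * ‖G z‖ ^ 2 + ‖deriv G z‖ ^ 2 := by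
      nlinarith [sq_nonneg (‖z‖ * ‖G z‖ - ‖deriv G z‖), sq_nonneg (‖z‖ * ‖G z‖),
        sq_nonneg ‖deriv G z‖]

theorem entropy_norm_sq_mul_one_sub_exp_le (hG0 : ∃ z, G z ≠ 0)
    (hlog : Integrable (fun z => ‖G z‖ ^ 2 * Real.log (‖G z‖ ^ 2)) γ) {ε N : ℝ} (hN : 0 ≤ N)
    (hε : ε ∈ Icc 0 (1 / 2)) :
    entropy γ (fun z => ‖G z‖ ^ 2 * (1 - ε * Real.exp (-N * ‖z‖ ^ 2))) ≤
      ∫ z, ‖deriv G z‖ ^ 2 ∂γ +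
        2 * (ε * N) * ∫ z, Real.exp (-N * ‖z‖ ^ 2) * inner ℝ (G z) (z * deriv G z) ∂γ +
        2 * (ε * N) ^ 2 * ∫ z, Real.exp (-(2 * N) * ‖z‖ ^ 2) * (‖z‖ ^ 2 * ‖G z‖ ^ 2) ∂γ := by
  have hw01 := exp_neg_mul_norm_sq_mem_Icc hN
  have hρ (z : ℂ) : 1 / 2 ≤ 1 - ε * Real.exp (-N * ‖z‖ ^ 2) := by
    linarith [mul_le_mul hε.2 (hw01 z).2 (hw01 z).1 one_half_pos.le]
  have hρ01 (z : ℂ) := one_sub_mul_mem_Icc (hw01 z) ⟨hε.1, hε.2.trans (by norm_num)⟩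
  have hY := integrable_exp_mul (N := 2 * N) (by positivity) hG.integrable_norm_id_mul_sq
  have hX := integrable_exp_mul hN hG.integrable_inner_id_mul_deriv
  have hρmeas : AEStronglyMeasurable (fun z : ℂ => 1 - ε * Real.exp (-N * ‖z‖ ^ 2)) γ := by fun_prop
  rw [← integral_const_mul, ← integral_const_mul,
    ← integral_add hG.integrable_norm_sq_deriv (hX.const_mul _),
    ← integral_add (hG.integrable_norm_sq_deriv.fun_add (hX.const_mul _)) (hY.const_mul _)]
  have hdiff : ContDiff ℝ 1 G := hG.differentiable.contDiff.restrict_scalars ℝ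
  refine entropy_complexGaussian_le (hdiff.norm_sq ℝ |>.mul (contDiff_const.sub
    (contDiff_const.mul (contDiff_const.mul (contDiff_norm_sq ℝ)).exp)))
    (fun z => mul_nonneg (sq_nonneg _) (hρ01 z).1) ?_ ?_
    (integrable_mul_log_mul hρmeas hρ01 hG.integrable_norm_sq hlog)
    ((hG.integrable_norm_sq_deriv.add (hX.const_mul _)).add (hY.const_mul _)) fun z => ?_
  · obtain ⟨z₀, hz₀⟩ := hG0
    refine (countable_setOf_eq_zero hG.differentiable hz₀).mono fun z hz => ?_
    simpa using (mul_eq_zero.mp hz).resolve_right (one_half_pos.trans_le (hρ z)).ne'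
  · exact (integrable_mul_of_le_one hG.integrable_norm_sq hρmeas
      (hρ01 · |>.1) (hρ01 · |>.2)).congr (ae_of_all _ fun z => mul_comm _ _)
  · have hexp : Real.exp (-(2 * N) * ‖z‖ ^ 2) = Real.exp (-N * ‖z‖ ^ 2) ^ 2 := by
      rw [← Real.exp_nat_mul]; ring_nf
    have h := mul_le_mul_of_nonneg_left (sq_mul_add_le (hρ z) (hρ01 z).2 (sq_nonneg ‖deriv G z‖)
      (mul_nonneg (sq_nonneg ‖z‖) (sq_nonneg ‖G z‖)) (ε * N * Real.exp (-N * ‖z‖ ^ 2))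
      (inner ℝ (G z) (z * deriv G z))) (sq_nonneg ‖G z‖)
    rw [fderiv_sq_add_fderiv_sq_norm_sq_mul_one_sub_exp hG.differentiable, hexp]
    linarith

theorem le_logSobolevDeficit (hG1 : ∫ z, ‖G z‖ ^ 2 ∂γ = 1) {ε N : ℝ} (hN : 0 ≤ N)
    (hε : ε ∈ Icc 0 (1 / 2)) :
    ε * (-∫ z, Real.exp (-N * ‖z‖ ^ 2) * (‖G z‖ ^ 2 * Real.log (‖G z‖ ^ 2)) ∂γ -
        2 * N * ∫ z, Real.exp (-N * ‖z‖ ^ 2) * inner ℝ (G z) (z * deriv G z) ∂γ) -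
      ε ^ 2 * ((∫ z, Real.exp (-N * ‖z‖ ^ 2) * ‖G z‖ ^ 2 ∂γ) ^ 2 +
        2 * N ^ 2 * ∫ z, Real.exp (-(2 * N) * ‖z‖ ^ 2) * (‖z‖ ^ 2 * ‖G z‖ ^ 2) ∂γ) ≤
      logSobolevDeficit G := by
  have hG0 : ∃ z, G z ≠ 0 := by
    by_contra! h
    simp [h] at hG1
  have hlog := hG.integrable_norm_sq_mul_log hG1
  have hlower := le_entropy_mul_one_sub (by fun_prop) (exp_neg_mul_norm_sq_mem_Icc hN)
    (fun z => sq_nonneg ‖G z‖) hG.integrable_norm_sq hG1 hlog ⟨hε.1, hε.2.trans (by norm_num)⟩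
  have hupper := hG.entropy_norm_sq_mul_one_sub_exp_le hG0 hlog hN hε
  rw [logSobolevDeficit]
  linarith

end FockSobolev

theorem hasSum_integral_exp_mul_norm_sq {F : ℂ → ℂ} {a : ℕ → ℂ} {N : ℝ} (hN : -1 < N)
    (hF : Continuous F) (ha : ∀ z, HasSum (fun k => a k * z ^ k) (F z))
    (hi : Integrable (fun z => Real.exp (-N * ‖z‖ ^ 2) * ‖F z‖ ^ 2) γ) :
    HasSum (fun k => ‖a k‖ ^ 2 * (k.factorial / (N + 1) ^ (k + 1)))
      (∫ z, Real.exp (-N * ‖z‖ ^ 2) * ‖F z‖ ^ 2 ∂γ) := by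
  have h := hasSum_integral_norm_sq_mul_exp (m := 0) hN hF ha
    (hi.congr (ae_of_all _ fun z => by simp [mul_comm]))
  simpa only [mul_zero, pow_zero, one_mul, mul_comm (‖F _‖ ^ 2), add_zero] using h

theorem hasSum_integral_exp_mul_inner {F H : ℂ → ℂ} {a b : ℕ → ℂ} {N : ℝ} (hN : -1 < N)
    (hF : Continuous F) (hH : Continuous H)
    (ha : ∀ z, HasSum (fun k => a k * z ^ k) (F z)) (hb : ∀ z, HasSum (fun k => b k * z ^ k) (H z))
    (hiF : Integrable (fun z => Real.exp (-N * ‖z‖ ^ 2) * ‖F z‖ ^ 2) γ)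
    (hiH : Integrable (fun z => Real.exp (-N * ‖z‖ ^ 2) * ‖H z‖ ^ 2) γ) :
    HasSum (fun k => inner ℝ (a k) (b k) * (k.factorial / (N + 1) ^ (k + 1)))
      (∫ z, Real.exp (-N * ‖z‖ ^ 2) * inner ℝ (F z) (H z) ∂γ) := by
  have hiadd : Integrable (fun z => Real.exp (-N * ‖z‖ ^ 2) * ‖F z + H z‖ ^ 2) γ := by
    refine ((hiF.add hiH).const_mul 2).mono' (Continuous.aestronglyMeasurable (by fun_prop))
      (ae_of_all _ fun z => ?_)
    rw [Pi.add_apply, ← mul_add, Real.norm_of_nonneg (by positivity), mul_left_comm]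
    refine mul_le_mul_of_nonneg_left ?_ (Real.exp_pos _).le
    linarith [parallelogram_law_with_norm ℝ (F z) (H z), sq_nonneg ‖F z - H z‖]
  have hadd := hasSum_integral_exp_mul_norm_sq (a := fun k => a k + b k) hN (hF.add hH)
    (fun z => ((ha z).add (hb z)).congr_fun fun k => add_mul _ _ _) hiadd
  have h := ((hadd.sub (hasSum_integral_exp_mul_norm_sq hN hF ha hiF)).sub
    (hasSum_integral_exp_mul_norm_sq hN hH hb hiH)).div_const 2
  have hpolar (c : ℝ) (u v : ℂ) :
      (c * ‖u + v‖ ^ 2 - c * ‖u‖ ^ 2 - c * ‖v‖ ^ 2) / 2 = c * inner ℝ u v := by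
    linear_combination (c / 2) * norm_add_sq_real u v
  simp only [Pi.add_apply] at h
  rw [← integral_sub' hiadd hiF, ← integral_sub' (hiadd.sub hiF) hiH, ← integral_div] at h
  simpa only [Pi.sub_apply, hpolar, mul_comm _ (_ / _ : ℝ)] using h

theorem natCast_add_one_le_pow {N : ℝ} (hN : 1 ≤ N) (k : ℕ) : (k + 1 : ℝ) ≤ (N + 1) ^ k :=
  calc (k + 1 : ℝ) ≤ 1 + k * N := by nlinarith [k.cast_nonneg (α := ℝ)]
    _ ≤ (1 + N) ^ k := one_add_mul_le_pow (by linarith) k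
    _ = (N + 1) ^ k := by rw [add_comm]

namespace FockSobolev

variable {G : ℂ → ℂ} (hG : FockSobolev G) {N : ℝ}
include hG

theorem integrable_exp_mul_norm_sq_id_mul_deriv (hN : 0 < N) :
    Integrable (fun z => Real.exp (-N * ‖z‖ ^ 2) * ‖z * deriv G z‖ ^ 2) γ := by
  have hcont := hG.differentiable.deriv.continuous
  refine (hG.integrable_norm_sq_deriv.const_mul N⁻¹).mono'
    (Continuous.aestronglyMeasurable (by fun_prop)) (ae_of_all _ fun z => ?_)
  rw [Real.norm_of_nonneg (by positivity), norm_mul, mul_pow, ← mul_assoc]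
  refine mul_le_mul_of_nonneg_right ?_ (sq_nonneg _)
  rw [neg_mul, Real.exp_neg, inv_mul_le_iff₀ (Real.exp_pos _), ← div_eq_mul_inv, le_div_iff₀' hN]
  linarith [Real.add_one_le_exp (N * ‖z‖ ^ 2)]

theorem hasSum_integral_exp_mul_inner_id_mul_deriv (hN : 0 < N) :
    HasSum (fun k => ‖taylorCoeff G k‖ ^ 2 * k.factorial * (k / (N + 1) ^ (k + 1)))
      (∫ z, Real.exp (-N * ‖z‖ ^ 2) * inner ℝ (G z) (z * deriv G z) ∂γ) := by
  refine (hasSum_integral_exp_mul_inner (by linarith) hG.differentiable.continuous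
    (continuous_id.mul hG.differentiable.deriv.continuous) (hasSum_taylorCoeff hG.differentiable)
    (hasSum_taylorCoeff_id_mul_deriv hG.differentiable)
    (integrable_exp_mul hN.le hG.integrable_norm_sq)
    (hG.integrable_exp_mul_norm_sq_id_mul_deriv hN)).congr_fun fun k => ?_
  rw [← nsmul_eq_mul, ← Nat.cast_smul_eq_nsmul ℝ, real_inner_smul_right, real_inner_self_eq_norm_sq]
  ring

theorem hasSum_integral_exp_mul_norm_sq (hN : 0 ≤ N) :
    HasSum (fun k => ‖taylorCoeff G k‖ ^ 2 * k.factorial * (1 / (N + 1) ^ (k + 1)))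
      (∫ z, Real.exp (-N * ‖z‖ ^ 2) * ‖G z‖ ^ 2 ∂γ) := by
  refine (_root_.hasSum_integral_exp_mul_norm_sq (by linarith) hG.differentiable.continuous
    (hasSum_taylorCoeff hG.differentiable)
    (integrable_exp_mul hN hG.integrable_norm_sq)).congr_fun fun k => ?_
  ring

theorem hasSum_integral_exp_mul_norm_id_mul_sq (hN : 0 ≤ N) :
    HasSum (fun k => ‖taylorCoeff G k‖ ^ 2 * k.factorial * ((k + 1) / (N + 1) ^ (k + 2)))
      (∫ z, Real.exp (-N * ‖z‖ ^ 2) * (‖z‖ ^ 2 * ‖G z‖ ^ 2) ∂γ) := by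
  have h := hasSum_integral_norm_sq_mul_exp (m := 1) (by linarith) hG.differentiable.continuous
    (hasSum_taylorCoeff hG.differentiable)
    ((integrable_exp_mul hN hG.integrable_norm_id_mul_sq).congr
      (ae_of_all _ fun z => by simp [mul_comm]))
  simp only [mul_one, mul_comm (_ * ‖G _‖ ^ 2)] at h
  refine h.congr_fun fun k => ?_
  rw [Nat.factorial_succ]
  push_cast
  ring

theorem norm_apply_zero_sq_div_le_integral_exp_mul (hN : 0 ≤ N) :
    ‖G 0‖ ^ 2 / (N + 1) ≤ ∫ z, Real.exp (-N * ‖z‖ ^ 2) * ‖G z‖ ^ 2 ∂γ := by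
  simpa [taylorCoeff_zero, div_eq_mul_inv] using
    le_hasSum (hG.hasSum_integral_exp_mul_norm_sq hN) 0 fun k _ => by positivity

theorem le_mul_integral_of_hasSum {c : ℕ → ℝ} {C S : ℝ}
    (hS : HasSum (fun k => ‖taylorCoeff G k‖ ^ 2 * k.factorial * c k) S)
    (hc : ∀ k, taylorCoeff G k ≠ 0 → c k ≤ C) : S ≤ C * ∫ z, ‖G z‖ ^ 2 ∂γ := by
  have h1 := (hasSum_integral_norm_sq hG.differentiable hG.integrable_norm_sq).mul_right C
  rw [mul_comm]
  refine hasSum_le (fun k => ?_) hS h1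
  rcases eq_or_ne (taylorCoeff G k) 0 with hk | hk
  · simp [hk]
  · exact mul_le_mul_of_nonneg_left (hc k hk) (by positivity)

theorem integral_exp_mul_norm_sq_le (hN : 0 ≤ N) :
    ∫ z, Real.exp (-N * ‖z‖ ^ 2) * ‖G z‖ ^ 2 ∂γ ≤ 1 / (N + 1) * ∫ z, ‖G z‖ ^ 2 ∂γ :=
  hG.le_mul_integral_of_hasSum (hG.hasSum_integral_exp_mul_norm_sq hN) fun k _ =>
    one_div_le_one_div_of_le (by linarith) (le_self_pow₀ (by linarith) k.succ_ne_zero)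

theorem integral_exp_mul_norm_id_mul_sq_le (hN : 1 ≤ N) :
    ∫ z, Real.exp (-N * ‖z‖ ^ 2) * (‖z‖ ^ 2 * ‖G z‖ ^ 2) ∂γ ≤
      1 / (N + 1) ^ 2 * ∫ z, ‖G z‖ ^ 2 ∂γ := by
  refine hG.le_mul_integral_of_hasSum (hG.hasSum_integral_exp_mul_norm_id_mul_sq (by linarith))
    fun k _ => ?_
  rw [pow_add, div_mul_eq_div_div]
  exact div_le_div_of_nonneg_right
    ((div_le_one (by positivity)).mpr (natCast_add_one_le_pow hN k)) (by positivity)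

theorem integral_exp_mul_inner_id_mul_deriv_le (hG' : deriv G 0 = 0) (hN : 1 ≤ N) :
    ∫ z, Real.exp (-N * ‖z‖ ^ 2) * inner ℝ (G z) (z * deriv G z) ∂γ ≤
      2 / (N + 1) ^ 3 * ∫ z, ‖G z‖ ^ 2 ∂γ := by
  refine hG.le_mul_integral_of_hasSum (hG.hasSum_integral_exp_mul_inner_id_mul_deriv (by linarith))
    fun k hk => ?_
  match k with
  | 0 => rw [Nat.cast_zero, zero_div]; positivity
  | 1 => exact absurd (by simp [taylorCoeff, hG']) hk
  | j + 2 =>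
    rw [add_right_comm, add_assoc j 1 2, pow_add, div_mul_eq_div_div]
    refine div_le_div_of_nonneg_right ((div_le_iff₀ (by positivity)).mpr ?_) (by positivity)
    push_cast
    linarith [natCast_add_one_le_pow hN j, j.cast_nonneg (α := ℝ)]

end FockSobolev

namespace IsCentered

variable {G : ℂ → ℂ} (hG : IsCentered G)
include hG

theorem norm_sq_mul_log_norm_sq_le (z : ℂ) :
    ‖G z‖ ^ 2 * Real.log (‖G z‖ ^ 2) ≤
      Real.log (‖G 0‖ ^ 2) * ‖G z‖ ^ 2 + ‖z‖ ^ 2 * ‖G z‖ ^ 2 := by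
  rcases eq_or_ne (G z) 0 with hz | hz
  · simp [hz]
  have h := Real.log_le_log (by positivity) (hG.norm_sq_le z)
  rw [Real.log_mul (pow_ne_zero 2 (norm_ne_zero_iff.mpr hG.apply_zero_ne_zero))
    (Real.exp_ne_zero _), Real.log_exp] at h
  linarith [mul_le_mul_of_nonneg_left h (sq_nonneg ‖G z‖)]

theorem integral_exp_mul_norm_sq_mul_log_le {N : ℝ} (hN : 1 ≤ N) :
    ∫ z, Real.exp (-N * ‖z‖ ^ 2) * (‖G z‖ ^ 2 * Real.log (‖G z‖ ^ 2)) ∂γ ≤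
      Real.log (‖G 0‖ ^ 2) * (‖G 0‖ ^ 2 / (N + 1)) + 1 / (N + 1) ^ 2 := by
  have hN0 : 0 ≤ N := by linarith
  have hM := integrable_exp_mul hN0 hG.integrable_norm_sq
  have hS := integrable_exp_mul hN0 hG.integrable_norm_id_mul_sq
  have hS2 := hG.integral_exp_mul_norm_id_mul_sq_le hN
  rw [hG.integral_norm_sq, mul_one] at hS2
  have hpoint (z : ℂ) : Real.exp (-N * ‖z‖ ^ 2) * (‖G z‖ ^ 2 * Real.log (‖G z‖ ^ 2)) ≤
      Real.log (‖G 0‖ ^ 2) * (Real.exp (-N * ‖z‖ ^ 2) * ‖G z‖ ^ 2) +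
        Real.exp (-N * ‖z‖ ^ 2) * (‖z‖ ^ 2 * ‖G z‖ ^ 2) := by
    linarith [mul_le_mul_of_nonneg_left (hG.norm_sq_mul_log_norm_sq_le z)
      (Real.exp_pos (-N * ‖z‖ ^ 2)).le]
  have hmono := integral_mono (integrable_exp_mul hN0
    (hG.integrable_norm_sq_mul_log hG.integral_norm_sq)) ((hM.const_mul _).add hS) hpoint
  rw [integral_add' (hM.const_mul _) hS, integral_const_mul] at hmono
  exact hmono.trans (add_le_add (mul_le_mul_of_nonpos_left
    (hG.norm_apply_zero_sq_div_le_integral_exp_mul hN0)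
    (Real.log_nonpos (sq_nonneg _) hG.norm_apply_zero_sq_le_one)) hS2)

theorem le_logSobolevDeficit_of_one_le {ε N : ℝ} (hN : 1 ≤ N) (hε : ε ∈ Icc 0 (1 / 2)) :
    ε * (-(Real.log (‖G 0‖ ^ 2) * (‖G 0‖ ^ 2 / (N + 1))) - 5 / (N + 1) ^ 2) - ε ^ 2 ≤
      logSobolevDeficit G := by
  have hN0 : 0 ≤ N := by linarith
  have hlog := hG.integral_exp_mul_norm_sq_mul_log_le hN
  have hX := hG.integral_exp_mul_inner_id_mul_deriv_le hG.deriv_zero hN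
  have hM := hG.integral_exp_mul_norm_sq_le hN0
  have hY := hG.integral_exp_mul_norm_id_mul_sq_le (by linarith : 1 ≤ 2 * N)
  rw [hG.integral_norm_sq, mul_one] at hX hM hY
  have hNX : 2 * N * ∫ z, Real.exp (-N * ‖z‖ ^ 2) * inner ℝ (G z) (z * deriv G z) ∂γ ≤
      4 / (N + 1) ^ 2 :=
    calc _ ≤ 2 * N * (2 / (N + 1) ^ 3) := mul_le_mul_of_nonneg_left hX (by positivity)
      _ ≤ 2 * (N + 1) * (2 / (N + 1) ^ 3) := by gcongr; linarith
      _ = 4 / (N + 1) ^ 2 := by field_simp; norm_num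
  have hM2 : (∫ z, Real.exp (-N * ‖z‖ ^ 2) * ‖G z‖ ^ 2 ∂γ) ^ 2 ≤ (1 / (N + 1)) ^ 2 :=
    pow_le_pow_left₀ (integral_nonneg fun z => by positivity) hM 2
  have hNY := mul_le_mul_of_nonneg_left hY (by positivity : 0 ≤ 2 * N ^ 2)
  have hsecond : (1 / (N + 1)) ^ 2 + 2 * N ^ 2 * (1 / (2 * N + 1) ^ 2) ≤ 1 := by
    have h1 : (1 / (N + 1)) ^ 2 ≤ (1 / 2) ^ 2 := by gcongr; linarith
    have h2 : 2 * N ^ 2 * (1 / (2 * N + 1) ^ 2) ≤ 1 / 2 := by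
      rw [mul_one_div, div_le_div_iff₀ (by positivity) two_pos]
      nlinarith
    linarith
  refine le_trans ?_ (hG.le_logSobolevDeficit hG.integral_norm_sq hN0 hε)
  refine sub_le_sub (mul_le_mul_of_nonneg_left ?_ hε.1)
    (mul_le_of_le_one_right (sq_nonneg ε) (by linarith))
  rw [show (5 : ℝ) = 1 + 4 by norm_num, add_div]
  linarith

-- Optimizes the previous bound with `N + 1 = 10 / x`, `ε = x² / 40`, where `x = T(1 - T)`.
theorem mul_one_sub_pow_four_div_le_logSobolevDeficit :
    (‖G 0‖ ^ 2 * (1 - ‖G 0‖ ^ 2)) ^ 4 / 1600 ≤ logSobolevDeficit G := by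
  have hT0 : 0 < ‖G 0‖ ^ 2 := by have := hG.apply_zero_ne_zero; positivity
  have hx0 : 0 ≤ ‖G 0‖ ^ 2 * (1 - ‖G 0‖ ^ 2) :=
    mul_nonneg hT0.le (sub_nonneg.mpr hG.norm_apply_zero_sq_le_one)
  have hx1 : ‖G 0‖ ^ 2 * (1 - ‖G 0‖ ^ 2) ≤ 1 / 4 := by nlinarith [sq_nonneg (‖G 0‖ ^ 2 - 1 / 2)]
  have hlog : Real.log (‖G 0‖ ^ 2) * ‖G 0‖ ^ 2 ≤ -(‖G 0‖ ^ 2 * (1 - ‖G 0‖ ^ 2)) := by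
    linarith [mul_le_mul_of_nonneg_right (Real.log_le_sub_one_of_pos hT0) hT0.le]
  generalize ‖G 0‖ ^ 2 * (1 - ‖G 0‖ ^ 2) = x at *
  rcases hx0.eq_or_lt with rfl | hx0
  · simpa using hG.le_logSobolevDeficit_of_one_le le_rfl (ε := 0) (by norm_num)
  have hN : 1 ≤ 10 / x - 1 := by
    rw [le_sub_iff_add_le, le_div_iff₀ hx0]
    linarith
  refine le_trans ?_ (hG.le_logSobolevDeficit_of_one_le hN (ε := x ^ 2 / 40)
    ⟨by positivity, by nlinarith⟩)
  rw [sub_add_cancel, ← mul_div_assoc, div_div_eq_mul_div, div_pow, div_div_eq_mul_div]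
  have h := mul_le_mul_of_nonneg_right hlog (by positivity : 0 ≤ x ^ 3 / 400)
  linarith

end IsCentered

theorem one_add_mul_log_one_add_le {t : ℝ} (ht : |t| ≤ 1 / 5) :
    (1 + t) * Real.log (1 + t) ≤ t + t ^ 2 / 2 + 2 * |t| ^ 3 := by
  obtain ⟨ht1, ht2⟩ := abs_le.mp ht
  have htaylor := (abs_le.mp (Real.abs_log_sub_add_sum_range_le (x := -t)
    (by rw [abs_neg]; linarith) 2)).2
  have hratio : (1 + t) * (|t| ^ 3 / (1 - |t|)) ≤ 3 / 2 * |t| ^ 3 := by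
    rw [← mul_div_assoc, div_le_iff₀ (by linarith)]
    nlinarith [mul_nonneg (pow_nonneg (abs_nonneg t) 3)
      (by linarith : 0 ≤ 3 / 2 * (1 - |t|) - (1 + t))]
  have hcube : -t ^ 3 ≤ |t| ^ 3 := by
    rw [← abs_pow]
    exact neg_le_abs _
  norm_num [Finset.sum_range_succ] at htaylor
  have hlog : Real.log (1 + t) ≤ t - t ^ 2 / 2 + |t| ^ 3 / (1 - |t|) := by linarith
  linarith [mul_le_mul_of_nonneg_left hlog (by linarith : 0 ≤ 1 + t)]

theorem sq_norm_one_add (s : ℂ) : ‖1 + s‖ ^ 2 = 1 + (2 * s.re + ‖s‖ ^ 2) := by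
  simp only [Complex.sq_norm, Complex.normSq_apply, Complex.add_re, Complex.add_im, Complex.one_re,
    Complex.one_im]
  ring

theorem two_mul_re_sq (s : ℂ) : 2 * s.re ^ 2 = ‖s‖ ^ 2 + (s ^ 2).re := by
  rw [Complex.sq_norm, Complex.normSq_apply, sq s, Complex.mul_re]
  ring

theorem norm_one_add_sq_mul_log_le_of_norm_le {s : ℂ} (hs : ‖s‖ ≤ 1 / 64) :
    ‖1 + s‖ ^ 2 * Real.log (‖1 + s‖ ^ 2) ≤ (2 * s + s ^ 2).re + 12 / 5 * ‖s‖ ^ 2 := by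
  have hre := abs_le.mp (Complex.abs_re_le_norm s)
  have hs0 := norm_nonneg s
  have ht : |2 * s.re + ‖s‖ ^ 2| ≤ 129 / 64 * ‖s‖ := by
    rw [abs_le]
    constructor <;> nlinarith
  have hcube : |2 * s.re + ‖s‖ ^ 2| ^ 3 ≤ (129 / 64 * ‖s‖) ^ 3 :=
    pow_le_pow_left₀ (abs_nonneg _) ht 3
  have hlog := one_add_mul_log_one_add_le (ht.trans (by linarith))
  have h3 : ‖s‖ ^ 3 ≤ 1 / 64 * ‖s‖ ^ 2 := by nlinarith [sq_nonneg ‖s‖]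
  have h4 : ‖s‖ ^ 4 ≤ 1 / 64 * ‖s‖ ^ 3 := by nlinarith [pow_nonneg hs0 3]
  have hcross : s.re * ‖s‖ ^ 2 ≤ ‖s‖ ^ 3 := by nlinarith [sq_nonneg ‖s‖]
  rw [sq_norm_one_add]
  have hadd : (2 * s + s ^ 2).re = 2 * s.re + (s ^ 2).re := by simp
  linarith [two_mul_re_sq s, sq_nonneg ‖s‖]

theorem norm_one_add_sq_mul_log_le_of_le_norm {s : ℂ} (hs : 1 / 64 ≤ ‖s‖) :
    ‖1 + s‖ ^ 2 * Real.log (‖1 + s‖ ^ 2) ≤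
      (2 * s + s ^ 2).re + ‖s‖ ^ 2 * (Real.log (‖s‖ ^ 2) + 390) := by
  have hs0 : 0 < ‖s‖ := by linarith
  have hlog : Real.log (1 + ‖s‖) ≤ Real.log ‖s‖ + ‖s‖⁻¹ := by
    rw [show 1 + ‖s‖ = ‖s‖ * (1 + ‖s‖⁻¹) by field_simp; ring, Real.log_mul hs0.ne' (by positivity)]
    linarith [Real.log_le_sub_one_of_pos (by positivity : 0 < 1 + ‖s‖⁻¹)]
  have hlog' : Real.log (1 + ‖s‖) ≤ ‖s‖ := by
    linarith [Real.log_le_sub_one_of_pos (by positivity : 0 < 1 + ‖s‖)]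
  have hmono : ‖1 + s‖ ^ 2 * Real.log (‖1 + s‖ ^ 2) ≤ (1 + ‖s‖) ^ 2 * (2 * Real.log (1 + ‖s‖)) := by
    have hnorm : ‖1 + s‖ ≤ 1 + ‖s‖ := by simpa using norm_add_le 1 s
    have hmul : (0 : ℝ) ≤ 2 * Real.log (1 + ‖s‖) := by
      have := Real.log_nonneg (by linarith : 1 ≤ 1 + ‖s‖)
      positivity
    rcases eq_or_ne (1 + s) 0 with h0 | h0
    · rw [h0]
      simpa using mul_nonneg (sq_nonneg (1 + ‖s‖)) hmul
    · have hlog1 := Real.log_le_log (norm_pos_iff.mpr h0) hnorm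
      rw [Real.log_pow]
      exact (mul_le_mul_of_nonneg_left (by push_cast; linarith) (sq_nonneg _)).trans
        (mul_le_mul_of_nonneg_right (pow_le_pow_left₀ (norm_nonneg _) hnorm 2) hmul)
  have hre : -(2 * ‖s‖ + ‖s‖ ^ 2) ≤ (2 * s + s ^ 2).re := by
    rw [← norm_pow, ← Complex.norm_two, ← norm_mul]
    exact neg_le.mp ((neg_le_abs _).trans ((Complex.abs_re_le_norm _).trans (norm_add_le _ _)))
  have hpow : Real.log (‖s‖ ^ 2) = 2 * Real.log ‖s‖ := by rw [Real.log_pow, Nat.cast_ofNat]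
  rw [hpow]
  have h1 := mul_le_mul_of_nonneg_left hlog (sq_nonneg ‖s‖)
  have h2 := mul_le_mul_of_nonneg_left hlog' (by positivity : 0 ≤ 1 + 2 * ‖s‖)
  have h3 : ‖s‖ ^ 2 * ‖s‖⁻¹ = ‖s‖ := by field_simp
  nlinarith

-- With `y = |z|²`: for small `s`, `y + 9 e^{-y/9} ≥ 9` leaves the Taylor coefficient `12/5`; for
-- `|s| ≥ 1/64`, `log |s|² ≤ y - 400` absorbs the loss of `390`.
theorem norm_one_add_sq_mul_log_le {s : ℂ} {y : ℝ} (hs : ‖s‖ ^ 2 ≤ Real.exp (-400) * Real.exp y) :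
    ‖1 + s‖ ^ 2 * Real.log (‖1 + s‖ ^ 2) ≤
      (2 * s + s ^ 2).re + (y * ‖s‖ ^ 2 + 9 * (Real.exp (-(1 / 9) * y) * ‖s‖ ^ 2)
        - 33 / 5 * ‖s‖ ^ 2) := by
  have hexp := Real.add_one_le_exp (-(1 / 9) * y)
  rcases le_total ‖s‖ (1 / 64) with h | h
  · nlinarith [norm_one_add_sq_mul_log_le_of_norm_le h, sq_nonneg ‖s‖]
  · have hlog := Real.log_le_log (by positivity) hs
    rw [← Real.exp_add, Real.log_exp] at hlog
    nlinarith [norm_one_add_sq_mul_log_le_of_le_norm h, sq_nonneg ‖s‖,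
      mul_le_mul_of_nonneg_left hlog (sq_nonneg ‖s‖), Real.exp_pos (-(1 / 9) * y)]

namespace FockSobolev

variable {F : ℂ → ℂ}

theorem const_mul (hF : FockSobolev F) (c : ℂ) : FockSobolev fun z => c * F z where
  differentiable := hF.differentiable.const_mul c
  integrable_norm_sq := by
    simpa only [norm_mul, mul_pow] using hF.integrable_norm_sq.const_mul (‖c‖ ^ 2)
  integrable_norm_sq_deriv := by
    simpa only [deriv_const_mul_field', norm_mul, mul_pow] using
      hF.integrable_norm_sq_deriv.const_mul (‖c‖ ^ 2)

theorem sub_const (hF : FockSobolev F) (c : ℂ) : FockSobolev fun z => F z - c where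
  differentiable := hF.differentiable.sub_const c
  integrable_norm_sq := by
    have hcont := hF.differentiable.continuous
    refine ((hF.integrable_norm_sq.add (integrable_const (‖c‖ ^ 2))).const_mul 2).mono'
      (Continuous.aestronglyMeasurable (by fun_prop)) (ae_of_all _ fun z => ?_)
    rw [Real.norm_of_nonneg (sq_nonneg _), Pi.add_apply]
    linarith [parallelogram_law_with_norm ℝ (F z) c, sq_nonneg ‖F z + c‖]
  integrable_norm_sq_deriv := by
    simpa only [deriv_sub_const] using hF.integrable_norm_sq_deriv

theorem integrable_sq (hF : FockSobolev F) : Integrable (fun z => F z ^ 2) γ := by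
  have hcont := hF.differentiable.continuous
  exact hF.integrable_norm_sq.mono' (Continuous.aestronglyMeasurable (by fun_prop))
    (ae_of_all _ fun z => (norm_pow _ _).le)

theorem integrable (hF : FockSobolev F) : Integrable F γ := by
  have hcont := hF.differentiable.continuous
  refine (hF.integrable_norm_sq.add (integrable_const 1)).mono'
    (Continuous.aestronglyMeasurable (by fun_prop)) (ae_of_all _ fun z => ?_)
  rw [Pi.add_apply]
  nlinarith [sq_nonneg (‖F z‖ - 1), norm_nonneg (F z)]

theorem integral_eq_apply_zero (hF : FockSobolev F) : ∫ z, F z ∂γ = F 0 :=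
  integral_eq_apply_zero_of_isRotationInvariant isRotationInvariant_complexGaussian
    hF.differentiable hF.integrable

theorem integral_exp_mul_norm_sq_le_of_apply_zero_of_deriv_zero (hF : FockSobolev F) (h0 : F 0 = 0)
    (h1 : deriv F 0 = 0) {N : ℝ} (hN : 0 ≤ N) :
    ∫ z, Real.exp (-N * ‖z‖ ^ 2) * ‖F z‖ ^ 2 ∂γ ≤ 1 / (N + 1) ^ 3 * ∫ z, ‖F z‖ ^ 2 ∂γ := by
  refine hF.le_mul_integral_of_hasSum (hF.hasSum_integral_exp_mul_norm_sq hN) fun k hk => ?_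
  match k with
  | 0 => exact absurd (by rw [taylorCoeff_zero, h0]) hk
  | 1 => exact absurd (by simp [taylorCoeff, h1]) hk
  | j + 2 =>
    exact one_div_le_one_div_of_le (by positivity)
      (pow_le_pow_right₀ (by linarith) (by omega : 3 ≤ j + 2 + 1))

-- The cubic and higher terms of `t log t` at `t = 1` are paid for by the frequencies `k ≥ 2` of
-- `s`, which the weight `e^{-|z|²/9}` damps by the factor `(9/10)³`.
theorem integral_norm_one_add_sq_mul_log_le {s : ℂ → ℂ} (hs : FockSobolev s) (h0 : s 0 = 0)
    (h1 : deriv s 0 = 0) (hsmall : ∀ z, ‖s z‖ ^ 2 ≤ Real.exp (-400) * Real.exp (‖z‖ ^ 2))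
    (hlog : Integrable (fun z => ‖1 + s z‖ ^ 2 * Real.log (‖1 + s z‖ ^ 2)) γ) :
    ∫ z, ‖1 + s z‖ ^ 2 * Real.log (‖1 + s z‖ ^ 2) ∂γ ≤
      ∫ z, ‖deriv s z‖ ^ 2 ∂γ + 961 / 1000 * ∫ z, ‖s z‖ ^ 2 ∂γ := by
  have hcoh : Integrable (fun z => 2 * s z + s z ^ 2) γ :=
    (hs.integrable.const_mul 2).add hs.integrable_sq
  have hmean : ∫ z, RCLike.re (2 * s z + s z ^ 2) ∂γ = 0 := by
    have hdiff := hs.differentiable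
    rw [integral_re hcoh, integral_eq_apply_zero_of_isRotationInvariant
      isRotationInvariant_complexGaussian (by fun_prop) hcoh]
    simp [h0]
  have hE := integrable_exp_mul (N := 1 / 9) (by norm_num) hs.integrable_norm_sq
  have hEle := hs.integral_exp_mul_norm_sq_le_of_apply_zero_of_deriv_zero h0 h1
    (N := 1 / 9) (by norm_num)
  rw [show (1 : ℝ) / (1 / 9 + 1) ^ 3 = 729 / 1000 by norm_num] at hEle
  have hr1 := hs.integrable_norm_id_mul_sq.add (hE.const_mul 9)
  have hr2 := hs.integrable_norm_sq.const_mul (33 / 5)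
  have hmono := integral_mono hlog (hcoh.re.add (hr1.sub hr2)) fun z =>
    norm_one_add_sq_mul_log_le (hsmall z)
  rw [integral_add' hcoh.re (hr1.sub hr2), integral_sub' hr1 hr2,
    integral_add' hs.integrable_norm_id_mul_sq (hE.const_mul 9), integral_const_mul,
    integral_const_mul, hs.integral_norm_id_mul_sq, hmean] at hmono
  linarith

end FockSobolev

theorem FockSobolev.integral_norm_sub_const_sq {F : ℂ → ℂ} (hF : FockSobolev F) (c : ℂ) :
    ∫ z, ‖F z - c‖ ^ 2 ∂γ = ∫ z, ‖F z‖ ^ 2 ∂γ - 2 * inner ℝ c (F 0) + ‖c‖ ^ 2 := by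
  have hinner : Integrable (fun z => 2 * inner ℝ c (F z)) γ :=
    (hF.integrable.const_inner c).const_mul 2
  have hsub : Integrable (fun z => ‖F z‖ ^ 2 - 2 * inner ℝ c (F z)) γ :=
    hF.integrable_norm_sq.sub hinner
  simp only [norm_sub_sq_real, real_inner_comm c]
  rw [integral_add hsub (integrable_const _),
    integral_sub hF.integrable_norm_sq hinner, integral_const_mul,
    integral_inner hF.integrable c, hF.integral_eq_apply_zero, integral_const, probReal_univ,
    one_smul]

namespace IsCentered

variable {G : ℂ → ℂ}

theorem integral_norm_inv_apply_zero_mul_sub_one_sq (hG : IsCentered G) :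
    ∫ z, ‖(G 0)⁻¹ * G z - 1‖ ^ 2 ∂γ = (‖G 0‖ ^ 2)⁻¹ - 1 := by
  rw [(hG.const_mul (G 0)⁻¹).integral_norm_sub_const_sq, inv_mul_cancel₀ hG.apply_zero_ne_zero]
  simp only [norm_mul, mul_pow, norm_inv, inv_pow, integral_const_mul, hG.integral_norm_sq,
    real_inner_self_eq_norm_sq, norm_one]
  ring

theorem norm_inv_apply_zero_mul_sub_one_sq_le (hG : IsCentered G) (z : ℂ) :
    ‖(G 0)⁻¹ * G z - 1‖ ^ 2 ≤ ((‖G 0‖ ^ 2)⁻¹ - 1) * Real.exp (‖z‖ ^ 2) := by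
  have hs := (hG.const_mul (G 0)⁻¹).sub_const 1
  have h := husimi_le_integral hs.differentiable hs.integrable_norm_sq z
  rwa [hG.integral_norm_inv_apply_zero_mul_sub_one_sq, husimi, Real.exp_neg, ← div_eq_mul_inv,
    div_le_iff₀ (Real.exp_pos _)] at h

theorem mul_one_sub_le_logSobolevDeficit_of_one_sub_le (hG : IsCentered G)
    (hnear : 1 - ‖G 0‖ ^ 2 ≤ Real.exp (-400) * ‖G 0‖ ^ 2) :
    39 / 1000 * (1 - ‖G 0‖ ^ 2) ≤ logSobolevDeficit G := by
  have ha := hG.apply_zero_ne_zero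
  have hT : 0 < ‖G 0‖ ^ 2 := by positivity
  have hs := (hG.const_mul (G 0)⁻¹).sub_const 1
  have hadd (z : ℂ) : 1 + ((G 0)⁻¹ * G z - 1) = (G 0)⁻¹ * G z := add_sub_cancel _ _
  have hscale (z : ℂ) : ‖(G 0)⁻¹ * G z‖ ^ 2 * Real.log (‖(G 0)⁻¹ * G z‖ ^ 2) =
      (‖G 0‖ ^ 2)⁻¹ * (‖G z‖ ^ 2 * Real.log (‖G z‖ ^ 2)) +
        (‖G 0‖ ^ 2)⁻¹ * Real.log (‖G 0‖ ^ 2)⁻¹ * ‖G z‖ ^ 2 := by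
    rw [norm_mul, mul_pow, norm_inv, inv_pow, mul_comm (‖G 0‖ ^ 2)⁻¹, mul_mul_log_mul]
  have hl := (hG.integrable_norm_sq_mul_log hG.integral_norm_sq).const_mul (‖G 0‖ ^ 2)⁻¹
  have hr := hG.integrable_norm_sq.const_mul ((‖G 0‖ ^ 2)⁻¹ * Real.log (‖G 0‖ ^ 2)⁻¹)
  have hle : (‖G 0‖ ^ 2)⁻¹ - 1 ≤ Real.exp (-400) := by
    rwa [inv_eq_one_div, div_sub_one hT.ne', div_le_iff₀ hT]
  have h := hs.integral_norm_one_add_sq_mul_log_le (by simp [ha])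
    (by simp [deriv_sub_const, hG.deriv_zero])
    (fun z => (hG.norm_inv_apply_zero_mul_sub_one_sq_le z).trans
      (mul_le_mul_of_nonneg_right hle (Real.exp_pos _).le))
    (by simp only [hadd, hscale]; exact hl.add hr)
  simp only [hadd, hscale, hG.integral_norm_inv_apply_zero_mul_sub_one_sq, deriv_sub_const,
    deriv_const_mul_field'] at h
  rw [integral_add hl hr] at h
  simp only [norm_mul, norm_inv, mul_pow, inv_pow, integral_const_mul, hG.integral_norm_sq,
    Real.log_inv] at h
  have hlog := Real.log_le_sub_one_of_pos hT
  have hmul := mul_le_mul_of_nonneg_left h hT.le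
  field_simp at hmul
  rw [logSobolevDeficit]
  linarith

theorem neg_log_sub_one_le_logSobolevDeficit (hG : IsCentered G) :
    -Real.log (‖G 0‖ ^ 2) - 1 ≤ logSobolevDeficit G := by
  have hpoint (z : ℂ) :
      ‖G z‖ ^ 2 * Real.log (husimi G z) ≤ ‖G z‖ ^ 2 * Real.log (‖G 0‖ ^ 2) := by
    rcases eq_or_ne (G z) 0 with h | h
    · simp [h]
    · exact mul_le_mul_of_nonneg_left (Real.log_le_log (by unfold husimi; positivity)
        (hG.husimi_le z)) (sq_nonneg _)
  have hint : Integrable (fun z => ‖G z‖ ^ 2 * Real.log (husimi G z)) γ := by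
    simp only [norm_sq_mul_log_husimi]
    exact (hG.integrable_norm_sq_mul_log hG.integral_norm_sq).sub hG.integrable_norm_id_mul_sq
  have h := integral_mono hint (hG.integrable_norm_sq.mul_const _) hpoint
  rw [integral_mul_const, hG.integral_norm_sq, one_mul] at h
  rw [hG.logSobolevDeficit_eq hG.integral_norm_sq]
  linarith

theorem mul_one_sub_norm_apply_zero_sq_le_logSobolevDeficit (hG : IsCentered G) :
    Real.exp (-404) ^ 4 / 1600 * (1 - ‖G 0‖ ^ 2) ≤ logSobolevDeficit G := by
  have hc : Real.exp (-404) ^ 4 ≤ 1 := pow_le_one₀ (Real.exp_pos _).le (by simp)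
  have hT : 0 < ‖G 0‖ ^ 2 := by have := hG.apply_zero_ne_zero; positivity
  have hT1 : 0 ≤ 1 - ‖G 0‖ ^ 2 := sub_nonneg.mpr hG.norm_apply_zero_sq_le_one
  rcases le_or_gt (1 - ‖G 0‖ ^ 2) (Real.exp (-400) * ‖G 0‖ ^ 2) with hnear | hfar
  · have hclose := hG.mul_one_sub_le_logSobolevDeficit_of_one_sub_le hnear
    exact (mul_le_mul_of_nonneg_right (by linarith) hT1).trans hclose
  rcases le_or_gt (‖G 0‖ ^ 2) (Real.exp (-2)) with hsmall | hlarge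
  · have hlog := (Real.log_le_iff_le_exp hT).mpr hsmall
    nlinarith [hG.neg_log_sub_one_le_logSobolevDeficit]
  -- Here `T ≥ e^{-2}` and `1 - T ≥ e^{-400} T`, whence the constant `e^{-404}`.
  have hx : Real.exp (-404) ≤ ‖G 0‖ ^ 2 * (1 - ‖G 0‖ ^ 2) :=
    calc Real.exp (-404) = Real.exp (-2) * (Real.exp (-400) * Real.exp (-2)) := by
          rw [← Real.exp_add, ← Real.exp_add]; norm_num
      _ ≤ ‖G 0‖ ^ 2 * (1 - ‖G 0‖ ^ 2) := by
        gcongr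
        exact (mul_le_mul_of_nonneg_left hlarge.le (Real.exp_pos _).le).trans hfar.le
  calc Real.exp (-404) ^ 4 / 1600 * (1 - ‖G 0‖ ^ 2)
      ≤ Real.exp (-404) ^ 4 / 1600 := mul_le_of_le_one_right (by positivity) (by linarith)
    _ ≤ (‖G 0‖ ^ 2 * (1 - ‖G 0‖ ^ 2)) ^ 4 / 1600 := by gcongr
    _ ≤ logSobolevDeficit G := hG.mul_one_sub_pow_four_div_le_logSobolevDeficit

end IsCentered

theorem fockNorm_sq (F : ℂ → ℂ) : fockNorm F ^ 2 = ∫ z, ‖F z‖ ^ 2 ∂γ := by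
  rw [← gammaInt_eq_integral, fockNorm, Real.sq_sqrt, gammaInt]
  exact mul_nonneg (by positivity) (integral_nonneg fun z => by positivity)

/-- The normalized coherent state `z ↦ exp(βz - |β|²/2)` of the Fock space. -/
noncomputable def coherentState (β z : ℂ) : ℂ :=
  Complex.exp (β * z - ((‖β‖ ^ 2 / 2 : ℝ) : ℂ))

theorem weyl_sub_const_mul_coherentState_conj (ξ c : ℂ) (F : ℂ → ℂ) (z : ℂ) :
    weyl ξ (fun z => F z - c * coherentState (conj ξ) z) z = weyl ξ F z - c := by
  have hone : coherentState (conj ξ) (z + ξ) *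
      Complex.exp (-(z * conj ξ) - ((‖ξ‖ ^ 2 / 2 : ℝ) : ℂ)) = 1 := by
    rw [coherentState, ← Complex.exp_add, Complex.exp_eq_one_iff]
    refine ⟨0, ?_⟩
    have hmul := Complex.conj_mul' ξ
    rw [RCLike.norm_conj]
    push_cast
    linear_combination hmul
  rw [weyl, weyl, sub_mul, mul_assoc, hone, mul_one]

theorem IsCentered.exists_integral_norm_sub_const_sq_le {G : ℂ → ℂ} (hG : IsCentered G) :
    ∃ c ∈ Metric.sphere (0 : ℂ) 1, ∫ z, ‖G z - c‖ ^ 2 ∂γ ≤ 2 * (1 - ‖G 0‖ ^ 2) := by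
  have h0 := norm_pos_iff.mpr hG.apply_zero_ne_zero
  have hc : ‖(‖G 0‖⁻¹ : ℝ) • G 0‖ = 1 := norm_smul_inv_norm hG.apply_zero_ne_zero
  refine ⟨_, mem_sphere_zero_iff_norm.mpr hc, ?_⟩
  rw [hG.integral_norm_sub_const_sq, hG.integral_norm_sq, hc, real_inner_smul_left,
    real_inner_self_eq_norm_sq]
  have hsq : ‖G 0‖⁻¹ * ‖G 0‖ ^ 2 = ‖G 0‖ := by field_simp
  have hle : ‖G 0‖ ≤ 1 := by
    have := hG.norm_apply_zero_sq_le_one; nlinarith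
  rw [hsq]
  nlinarith

theorem FockSobolev.exists_fockNorm_sub_coherentState_sq_le {F : ℂ → ℂ} (hF : FockSobolev F)
    (hF1 : ∫ z, ‖F z‖ ^ 2 ∂γ = 1) :
    ∃ β : ℂ, ∃ c ∈ Metric.sphere (0 : ℂ) 1,
      Real.exp (-404) ^ 4 / 3200 * fockNorm (fun z => F z - c * coherentState β z) ^ 2 ≤
        logSobolevDeficit F := by
  obtain ⟨ξ, hG⟩ := hF.exists_isCentered_weyl hF1
  obtain ⟨c, hc, hdist⟩ := hG.exists_integral_norm_sub_const_sq_le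
  refine ⟨conj ξ, c, hc, ?_⟩
  calc Real.exp (-404) ^ 4 / 3200 * fockNorm (fun z => F z - c * coherentState (conj ξ) z) ^ 2
      = Real.exp (-404) ^ 4 / 3200 * ∫ z, ‖weyl ξ F z - c‖ ^ 2 ∂γ := by
        simp only [fockNorm_sq, ← weyl_sub_const_mul_coherentState_conj, integral_norm_sq_weyl]
    _ ≤ Real.exp (-404) ^ 4 / 3200 * (2 * (1 - ‖weyl ξ F 0‖ ^ 2)) := by gcongr
    _ = Real.exp (-404) ^ 4 / 1600 * (1 - ‖weyl ξ F 0‖ ^ 2) := by ring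
    _ ≤ logSobolevDeficit (weyl ξ F) := hG.mul_one_sub_norm_apply_zero_sq_le_logSobolevDeficit
    _ = logSobolevDeficit F := hF.logSobolevDeficit_weyl hF1 ξ

/-- **Stable logarithmic Sobolev inequality for entire functions (Frank–Nicola–Tilli).**
There is `c* > 0` such that every `F ∈ F²(ℂ)` with `‖F‖_γ = 1` satisfies
`∫|F'|² dγ ≥ ∫ |F|² ln|F|² dγ + c* inf_{β ∈ ℂ, |c|=1} ‖F − c e^{βz−|β|²/2}‖_γ²`. -/
theorem stmt4 :
    ∃ cstar : ℝ, 0 < cstar ∧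
      ∀ F : ℂ → ℂ, Differentiable ℂ F →
        Integrable (fun z : ℂ => ‖F z‖ ^ 2 * Real.exp (-‖z‖ ^ 2)) →
        Integrable (fun z : ℂ => ‖deriv F z‖ ^ 2 * Real.exp (-‖z‖ ^ 2)) →
        fockNorm F = 1 →
        gammaInt (fun z => ‖F z‖ ^ 2 * Real.log (‖F z‖ ^ 2)) +
            cstar * (⨅ p : ℂ × Metric.sphere (0 : ℂ) 1,
              (fockNorm (fun z =>
                F z - p.2.1 * Complex.exp (p.1 * z - ((‖p.1‖ ^ 2 / 2 : ℝ) : ℂ)))) ^ 2)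
          ≤ gammaInt (fun z => ‖deriv F z‖ ^ 2) := by
  refine ⟨Real.exp (-404) ^ 4 / 3200, by positivity, fun F hF hi hi' hF1 => ?_⟩
  have hFS : FockSobolev F :=
    ⟨hF, integrable_complexGaussian_iff.mpr (by simpa only [smul_eq_mul, mul_comm] using hi),
      integrable_complexGaussian_iff.mpr (by simpa only [smul_eq_mul, mul_comm] using hi')⟩
  have hnorm : ∫ z, ‖F z‖ ^ 2 ∂γ = 1 := by rw [← fockNorm_sq, hF1, one_pow]
  obtain ⟨β, c, hc, hle⟩ := hFS.exists_fockNorm_sub_coherentState_sq_le hnorm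
  have hinf := ciInf_le (ι := ℂ × Metric.sphere (0 : ℂ) 1)
    (f := fun p => fockNorm (fun z => F z - p.2.1 * coherentState p.1 z) ^ 2)
    ⟨0, forall_mem_range.mpr fun p => sq_nonneg _⟩ (β, ⟨c, hc⟩)
  have hmul := mul_le_mul_of_nonneg_left hinf
    (by positivity : 0 ≤ Real.exp (-404) ^ 4 / 3200)
  rw [gammaInt_eq_integral, gammaInt_eq_integral, ← le_sub_iff_add_le']
  exact hmul.trans hle
end

section
/- Let H be a reproducing kernel Hilbert space of real- or complex-valued functions isometrically embedded in L²(Ω, μ) for some measure space (Ω, μ). Fix F ∈ H and ε > 0. Suppose there exists C > 0 such that every G ∈ H with inf_{|λ|=1} ‖F − λG‖_{L²} < ε satisfies inf_{|λ|=1} ‖F − λG‖_{L²} ≤ C ‖ |F| − |G| ‖_{L²}. Suppose also that phase retrieval holds at F, i.e., if G ∈ H and |F| = |G| almost everywhere then F = λG for some unimodular scalar λ. Then there exists C' > 0 such that for all G ∈ H, inf_{|λ|=1} ‖F − λG‖_{L²} ≤ C' ‖ |F| − |G| ‖_{L²}. -/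
open MeasureTheory

/-!
The modulus map `G ↦ |G|` from `H` to `L²(μ; ℝ)` is norm preserving, and it is closed: if
`|u n| → y` in `L²`, then, along a subsequence, `|u n| → y` almost everywhere. As `u` is bounded,
that subsequence has a weak limit `G` along an ultrafilter. Point evaluations are weakly continuous,
so `|G| = y`, hence `‖u n‖ → ‖y‖ = ‖G‖` and the weak limit is a strong one.

Phase retrieval says that the fiber of the modulus map through `F` is contained in the
circle of unimodular multiples of `F`; by closedness, `|G|` close to `|F|` forces `G` to be close to
that circle. The remaining `G` satisfy `‖|F| - |G|‖ ≥ δ`, and for them the trivial bound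
`‖F - G‖ ≤ 2 ‖F‖ + ‖|F| - |G|‖` suffices.
-/

open Filter Topology

section PhaseDist

variable {𝕜 E : Type*} [NormedField 𝕜] [SeminormedAddCommGroup E] [NormedSpace 𝕜 E]

variable (𝕜) in
/-- The distance between `F` and `G` up to a global phase, i.e. the distance from `F` to the set of
unimodular multiples of `G`. -/
noncomputable def phaseDist (F G : E) : ℝ :=
  ⨅ θ : Metric.sphere (0 : 𝕜) 1, ‖F - θ.1 • G‖

theorem phaseDist_smul_left_le {θ : 𝕜} (hθ : ‖θ‖ = 1) (F G : E) :
    phaseDist 𝕜 (θ • F) G ≤ ‖F - G‖ := by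
  have hbdd : BddBelow (Set.range fun η : Metric.sphere (0 : 𝕜) 1 => ‖θ • F - η.1 • G‖) :=
    ⟨0, Set.forall_mem_range.2 fun _ => norm_nonneg _⟩
  calc phaseDist 𝕜 (θ • F) G ≤ ‖θ • F - θ • G‖ := ciInf_le hbdd ⟨θ, by simpa using hθ⟩
    _ = ‖F - G‖ := by rw [← smul_sub, norm_smul, hθ, one_mul]

theorem phaseDist_le_norm_sub (F G : E) : phaseDist 𝕜 F G ≤ ‖F - G‖ := by
  simpa only [one_smul] using phaseDist_smul_left_le (norm_one (α := 𝕜)) F G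

theorem eventually_phaseDist_smul_left_lt {θ : 𝕜} (hθ : ‖θ‖ = 1) (F : E) {ε : ℝ} (hε : 0 < ε) :
    ∀ᶠ G in 𝓝 F, phaseDist 𝕜 (θ • F) G < ε := by
  filter_upwards [Metric.ball_mem_nhds F hε] with G hG
  exact (phaseDist_smul_left_le hθ F G).trans_lt (mem_ball_iff_norm'.1 hG)

end PhaseDist

section WeakConvergence

variable {𝕜 ι H : Type*} [RCLike 𝕜] [NormedAddCommGroup H] [InnerProductSpace 𝕜 H]

theorem exists_forall_tendsto_dual_of_norm_le [CompleteSpace H] (U : Ultrafilter ι)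
    {u : ι → H} {R : ℝ} (hR : ∀ᶠ i in U, ‖u i‖ ≤ R) :
    ∃ G : H, ∀ L : StrongDual 𝕜 H, Tendsto (fun i => L (u i)) U (𝓝 (L G)) := by
  let D : H → WeakDual 𝕜 H := fun f => StrongDual.toWeakDual (InnerProductSpace.toDual 𝕜 H f)
  have hball : ∀ᶠ i in U, D (u i) ∈ WeakDual.toStrongDual ⁻¹' Metric.closedBall 0 R := by
    filter_upwards [hR] with i hi
    simpa [D] using hi
  obtain ⟨φ, -, hφ⟩ := (WeakDual.isCompact_closedBall (𝕜 := 𝕜) (E := H) 0 R).ultrafilter_le_nhds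
    (U.map fun i => D (u i)) (le_principal_iff.2 hball)
  have hinner : ∀ h : H, Tendsto (fun i => inner 𝕜 (u i) h) U (𝓝 (φ h)) := fun h =>
    ((WeakDual.eval_continuous h).tendsto φ).comp hφ
  refine ⟨(InnerProductSpace.toDual 𝕜 H).symm (WeakDual.toStrongDual φ), fun L => ?_⟩
  obtain ⟨h, rfl⟩ := (InnerProductSpace.toDual 𝕜 H).surjective L
  have hconj : Tendsto (fun i => inner 𝕜 h (u i)) U (𝓝 (starRingEnd 𝕜 (φ h))) := by
    simpa only [Function.comp_def, inner_conj_symm] using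
      (RCLike.continuous_conj.tendsto _).comp (hinner h)
  rwa [← WeakDual.toStrongDual_apply, ← InnerProductSpace.toDual_symm_apply (𝕜 := 𝕜),
    inner_conj_symm] at hconj

theorem tendsto_of_tendsto_inner_of_tendsto_norm {l : Filter ι} {u : ι → H} {G : H}
    (hinner : Tendsto (fun i => inner 𝕜 G (u i)) l (𝓝 (inner 𝕜 G G)))
    (hnorm : Tendsto (fun i => ‖u i‖) l (𝓝 ‖G‖)) : Tendsto u l (𝓝 G) := by
  have hre := (RCLike.continuous_re.tendsto _).comp hinner
  have hsq : Tendsto (fun i => ‖G - u i‖ ^ 2) l (𝓝 0) := by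
    have hexpand := ((hre.const_mul 2).const_sub (‖G‖ ^ 2)).add (hnorm.pow 2)
    have hzero : ‖G‖ ^ 2 - 2 * RCLike.re (inner 𝕜 G G) + ‖G‖ ^ 2 = 0 := by
      rw [← norm_sq_eq_re_inner]; ring
    simpa only [hzero, Function.comp_def, ← norm_sub_sq] using hexpand
  rw [tendsto_iff_norm_sub_tendsto_zero]
  simpa only [Real.sqrt_sq (norm_nonneg _), Real.sqrt_zero, norm_sub_rev G] using hsq.sqrt

end WeakConvergence

section SquareIntegrable

variable {Ω : Type*} [MeasurableSpace Ω] {μ : Measure Ω}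

theorem memLp_two_of_integral_sq_ne_zero {a : Ω → ℝ} (ha : 0 ≤ a) (h : ∫ x, a x ^ 2 ∂μ ≠ 0) :
    MemLp a 2 μ := by
  have hint : Integrable (fun x => a x ^ 2) μ := not_imp_comm.1 integral_undef h
  have hmeas : AEStronglyMeasurable (fun x => √(a x ^ 2)) μ :=
    Real.continuous_sqrt.comp_aestronglyMeasurable hint.aestronglyMeasurable
  simp only [Real.sqrt_sq (ha _)] at hmeas
  exact (memLp_two_iff_integrable_sq hmeas).2 hint

theorem norm_toLp_two_eq_sqrt_integral_sq {a : Ω → ℝ} (ha : MemLp a 2 μ) :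
    ‖ha.toLp a‖ = √(∫ x, a x ^ 2 ∂μ) := by
  rw [norm_eq_sqrt_real_inner, L2.inner_def]
  congr 1
  refine integral_congr_ae ?_
  filter_upwards [ha.coeFn_toLp] with x hx
  rw [hx, real_inner_self_eq_norm_sq, Real.norm_eq_abs, sq_abs]

end SquareIntegrable

section Modulus

variable {𝕜 Ω H : Type*} [RCLike 𝕜] [MeasurableSpace Ω] {μ : Measure Ω}
  [NormedAddCommGroup H] [InnerProductSpace 𝕜 H] {ev : H →ₗ[𝕜] (Ω → 𝕜)}

theorem memLp_two_norm_eval (hiso : ∀ f : H, ∫ x, ‖ev f x‖ ^ 2 ∂μ = ‖f‖ ^ 2) (f : H) :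
    MemLp (fun x => ‖ev f x‖) 2 μ := by
  rcases eq_or_ne f 0 with rfl | hf
  · simp
  · refine memLp_two_of_integral_sq_ne_zero (fun x => norm_nonneg _) ?_
    rw [hiso f]
    exact pow_ne_zero 2 (norm_ne_zero_iff.2 hf)

/-- The modulus map `f ↦ |f|` from a Hilbert space of functions isometrically embedded in `L²(μ)`
to real `L²(μ)`; an abstract vector `f : H` represents the function `ev f`. -/
noncomputable def modulusLp (hiso : ∀ f : H, ∫ x, ‖ev f x‖ ^ 2 ∂μ = ‖f‖ ^ 2) (f : H) :
    Lp ℝ 2 μ :=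
  (memLp_two_norm_eval hiso f).toLp

variable (hiso : ∀ f : H, ∫ x, ‖ev f x‖ ^ 2 ∂μ = ‖f‖ ^ 2)

theorem modulusLp_ae_eq (f : H) : modulusLp hiso f =ᵐ[μ] fun x => ‖ev f x‖ :=
  (memLp_two_norm_eval hiso f).coeFn_toLp

theorem norm_modulusLp (f : H) : ‖modulusLp hiso f‖ = ‖f‖ := by
  rw [modulusLp, norm_toLp_two_eq_sqrt_integral_sq, hiso, Real.sqrt_sq (norm_nonneg f)]

theorem dist_modulusLp (F G : H) :
    dist (modulusLp hiso F) (modulusLp hiso G) = √(∫ x, (‖ev F x‖ - ‖ev G x‖) ^ 2 ∂μ) := by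
  rw [dist_eq_norm, modulusLp, modulusLp, ← MemLp.toLp_sub, norm_toLp_two_eq_sqrt_integral_sq]
  simp only [Pi.sub_apply]

theorem phaseDist_le_two_mul_norm_add_dist_modulusLp (F G : H) :
    phaseDist 𝕜 F G ≤ 2 * ‖F‖ + dist (modulusLp hiso F) (modulusLp hiso G) := by
  have hG : ‖G‖ ≤ ‖F‖ + dist (modulusLp hiso F) (modulusLp hiso G) := by
    simpa only [norm_modulusLp, dist_eq_norm] using
      norm_le_norm_add_norm_sub (modulusLp hiso F) (modulusLp hiso G)
  linarith [phaseDist_le_norm_sub (𝕜 := 𝕜) F G, norm_sub_le F G]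

variable (hpoint : ∀ x : Ω, ∃ Cx : ℝ, ∀ f : H, ‖ev f x‖ ≤ Cx * ‖f‖) [CompleteSpace H]

include hpoint

theorem exists_mapClusterPt_of_tendsto_modulusLp {u : ℕ → H} {y : Lp ℝ 2 μ}
    (hu : Tendsto (fun n => modulusLp hiso (u n)) atTop (𝓝 y)) :
    ∃ G, modulusLp hiso G = y ∧ MapClusterPt G atTop u := by
  have hnorm : Tendsto (fun n => ‖u n‖) atTop (𝓝 ‖y‖) := by
    simpa only [norm_modulusLp] using hu.norm
  obtain ⟨ns, hns, hae⟩ := (tendstoInMeasure_of_tendsto_Lp hu).exists_seq_tendsto_ae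
  have hU : Tendsto ns (hyperfilter ℕ : Ultrafilter ℕ) atTop :=
    hns.tendsto_atTop.mono_left Nat.hyperfilter_le_atTop
  obtain ⟨G, hG⟩ := exists_forall_tendsto_dual_of_norm_le (𝕜 := 𝕜) (hyperfilter ℕ)
    (u := u ∘ ns) (R := ‖y‖ + 1) ((hnorm.comp hU).eventually_le_const (lt_add_one _))
  have heval (x : Ω) : Tendsto (fun i => ev (u (ns i)) x) (hyperfilter ℕ : Ultrafilter ℕ)
      (𝓝 (ev G x)) := by
    obtain ⟨Cx, hCx⟩ := hpoint x
    exact hG (LinearMap.mkContinuous (LinearMap.proj x ∘ₗ ev) Cx hCx)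
  have hmod : modulusLp hiso G = y := by
    refine Lp.ext ?_
    filter_upwards [modulusLp_ae_eq hiso G, hae, ae_all_iff.2 fun n => modulusLp_ae_eq hiso (u n)]
      with x hGx hyx hux
    simp only [hux] at hyx
    rw [hGx]
    exact tendsto_nhds_unique (heval x).norm (hyx.mono_left Nat.hyperfilter_le_atTop)
  have hstrong : Tendsto (u ∘ ns) (hyperfilter ℕ : Ultrafilter ℕ) (𝓝 G) := by
    refine tendsto_of_tendsto_inner_of_tendsto_norm (hG (innerSL 𝕜 G)) ?_
    rw [← norm_modulusLp hiso G, hmod]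
    exact hnorm.comp hU
  exact ⟨G, hmod, hstrong.mapClusterPt.of_comp hU⟩

theorem isClosedMap_modulusLp : IsClosedMap (modulusLp hiso) := by
  intro s hs
  refine IsSeqClosed.isClosed fun v y hv hy => ?_
  choose u hus huv using hv
  obtain ⟨G, hGy, hG⟩ := exists_mapClusterPt_of_tendsto_modulusLp hiso hpoint
    (hy.congr fun n => (huv n).symm)
  exact ⟨G, hs.mem_of_mapClusterPt hG (.of_forall hus), hGy⟩

theorem exists_pos_forall_dist_modulusLp_lt_phaseDist_lt {F : H}
    (hPR : ∀ G : H, (∀ᵐ x ∂μ, ‖ev F x‖ = ‖ev G x‖) → ∃ θ : 𝕜, ‖θ‖ = 1 ∧ F = θ • G)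
    {ε : ℝ} (hε : 0 < ε) :
    ∃ δ > 0, ∀ G, dist (modulusLp hiso F) (modulusLp hiso G) < δ → phaseDist 𝕜 F G < ε := by
  have hfiber : ∀ G ∈ modulusLp hiso ⁻¹' {modulusLp hiso F},
      ∀ᶠ G' in 𝓝 G, phaseDist 𝕜 F G' < ε := by
    intro G hG
    obtain ⟨θ, hθ, rfl⟩ := hPR G <| (modulusLp_ae_eq hiso F).symm.trans <|
      (congrArg (⇑) hG.symm).eventuallyEq.trans (modulusLp_ae_eq hiso G)
    exact eventually_phaseDist_smul_left_lt hθ G hε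
  obtain ⟨δ, hδ, hnear⟩ := Metric.eventually_nhds_iff.1
    ((isClosedMap_modulusLp hiso hpoint).eventually_nhds_fiber _ hfiber)
  exact ⟨δ, hδ, fun G hG => hnear (by rwa [dist_comm]) G rfl⟩

end Modulus

/-- **Local reduction in a reproducing kernel Hilbert space.**
`H` is a Hilbert space over `𝕜 = ℝ` or `ℂ`, realized as a space of functions on `Ω`
via the linear map `ev` with bounded point evaluations (RKHS), isometrically embedded
in `L²(Ω, μ)`. If local stability holds at `F` for all `G` within distance `ε` of the
circle through `F`, and phase retrieval holds at `F`, then local stability holds at `F`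
for all `G ∈ H`. -/
theorem stmt5 {𝕜 : Type*} [RCLike 𝕜] {Ω : Type*} [MeasurableSpace Ω] (μ : Measure Ω)
    {H : Type*} [NormedAddCommGroup H] [InnerProductSpace 𝕜 H] [CompleteSpace H]
    (ev : H →ₗ[𝕜] (Ω → 𝕜))
    (hpoint : ∀ x : Ω, ∃ Cx : ℝ, ∀ f : H, ‖ev f x‖ ≤ Cx * ‖f‖)
    (hiso : ∀ f : H, ∫ x, ‖ev f x‖ ^ 2 ∂μ = ‖f‖ ^ 2)
    (F : H) (ε : ℝ) (hε : 0 < ε) (C : ℝ) (hC : 0 < C)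
    (hloc : ∀ G : H,
        (⨅ θ : Metric.sphere (0 : 𝕜) 1, ‖F - θ.1 • G‖) < ε →
        (⨅ θ : Metric.sphere (0 : 𝕜) 1, ‖F - θ.1 • G‖)
          ≤ C * Real.sqrt (∫ x, (‖ev F x‖ - ‖ev G x‖) ^ 2 ∂μ))
    (hPR : ∀ G : H, (∀ᵐ x ∂μ, ‖ev F x‖ = ‖ev G x‖) →
        ∃ θ : 𝕜, ‖θ‖ = 1 ∧ F = θ • G) :
    ∃ C' : ℝ, 0 < C' ∧ ∀ G : H,
      (⨅ θ : Metric.sphere (0 : 𝕜) 1, ‖F - θ.1 • G‖)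
        ≤ C' * Real.sqrt (∫ x, (‖ev F x‖ - ‖ev G x‖) ^ 2 ∂μ) := by
  obtain ⟨δ, hδ, hnear⟩ := exists_pos_forall_dist_modulusLp_lt_phaseDist_lt hiso hpoint hPR hε
  refine ⟨max C (2 * ‖F‖ / δ + 1), lt_max_of_lt_left hC, fun G => ?_⟩
  simp only [← dist_modulusLp hiso] at hloc ⊢
  change phaseDist 𝕜 F G ≤ _
  set t := dist (modulusLp hiso F) (modulusLp hiso G)
  rcases lt_or_ge t δ with hlt | hge
  · calc phaseDist 𝕜 F G ≤ C * t := hloc G (hnear G hlt)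
      _ ≤ max C (2 * ‖F‖ / δ + 1) * t := by gcongr; exact le_max_left _ _
  · have hnorm : 2 * ‖F‖ ≤ 2 * ‖F‖ / δ * t := by
      rw [div_mul_eq_mul_div, le_div_iff₀ hδ]
      gcongr
    calc phaseDist 𝕜 F G ≤ 2 * ‖F‖ + t := phaseDist_le_two_mul_norm_add_dist_modulusLp hiso F G
      _ ≤ (2 * ‖F‖ / δ + 1) * t := by linarith
      _ ≤ max C (2 * ‖F‖ / δ + 1) * t := by gcongr; exact le_max_right _ _
end

section
/- Let D ≥ 1, let a₁, …, a_D ∈ ℂ, and for ℓ ≥ 1 set U_ℓ(z) = Σ_{n ∈ I_ℓ, n ≤ D} a_n z^n, where I_ℓ = {n ∈ ℕ : ℓ² ≤ n < (ℓ+1)²}. Then for every ℓ ≥ 1 and every integer j ≥ 0, (1/π) ∫_{{j ≤ |z| < j+1}} |U_ℓ(z)|² e^{−|z|²} dm(z) ≤ e^{1/4} e^{−((|j−ℓ|−1)₊)²} ‖U_ℓ‖_F², where x₊ = max(x, 0). -/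
/-!
Distinct powers of `z` are orthogonal for every radial weight, so for `F = ∑ aₙ zⁿ` the integral of
`|F|² exp (-c |z|²)` is `π ∑ |aₙ|² n! / c ^ (n + 1)`. To bound the Gaussian mass of `F` on
`{|z| ≥ R}` when all exponents satisfy `n + 1 ≤ L²`, `L < R`, replace `exp (-|z|²)` by the larger
`exp (-R (R - L)) exp (-c |z|²)` with the Chernoff parameter `c = L / R`. This multiplies the `n`-th
term by `(R / L) ^ (n + 1) ≤ exp (L² (R / L - 1)) = exp (L (R - L))`, and the total loss is
`exp (-(R - L)²)`. The same choice of `c` works on `{|z| ≤ R}` when `n + 1 ≥ L²` and `L > R`.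
-/

open MeasureTheory

/-- The block polynomial `U_ℓ(z) = Σ_{n ∈ I_ℓ, n ≤ D} a_n zⁿ`, where
`I_ℓ = {n : ℓ² ≤ n < (ℓ+1)²}`. -/
noncomputable def Ublock (D ℓ : ℕ) (a : ℕ → ℂ) (z : ℂ) : ℂ :=
  ∑ n ∈ (Finset.Icc 1 D).filter (fun n => ℓ ^ 2 ≤ n ∧ n < (ℓ + 1) ^ 2), a n * z ^ n

open ComplexConjugate

section RadialWeight

theorem integral_pow_mul_conj_pow_mul_radial_eq_zero (w : ℝ → ℂ) {n m : ℕ} (hnm : n ≠ m) :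
    ∫ z : ℂ, z ^ n * conj z ^ m * w ‖z‖ = 0 := by
  -- The rotation by `π / (n - m)` changes the sign of the integrand.
  set ζ : Circle := Circle.exp (Real.pi / ((n : ℝ) - m)) with hζ
  have hζ_pow : (ζ : ℂ) ^ n * conj (ζ : ℂ) ^ m = -1 := by
    have hne : (n : ℂ) - m ≠ 0 := sub_ne_zero.mpr (by exact_mod_cast hnm)
    rw [hζ, Circle.coe_exp, ← Complex.exp_conj, ← Complex.exp_nat_mul, ← Complex.exp_nat_mul,
      ← Complex.exp_add, ← Complex.exp_pi_mul_I]
    congr 1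
    simp only [map_mul, Complex.conj_ofReal, Complex.conj_I]
    push_cast
    field_simp
    ring
  have h_rotate (z : ℂ) : rotation ζ z ^ n * conj (rotation ζ z) ^ m * w ‖rotation ζ z‖ =
      -(z ^ n * conj z ^ m * w ‖z‖) := by
    rw [LinearIsometryEquiv.norm_map, rotation_apply, map_mul, mul_pow, mul_pow]
    linear_combination (z ^ n * conj z ^ m * w ‖z‖) * hζ_pow
  have h_invariant := (rotation ζ).measurePreserving.integral_comp
    (rotation ζ).toHomeomorph.measurableEmbedding (fun z : ℂ => z ^ n * conj z ^ m * w ‖z‖)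
  simp_rw [h_rotate, integral_neg] at h_invariant
  exact self_eq_neg.mp h_invariant.symm

variable {w : ℝ → ℝ}

theorem integrable_pow_mul_conj_pow_mul_radial
    (hw : ∀ k : ℕ, Integrable fun z : ℂ => ‖z‖ ^ k * w ‖z‖) (n m : ℕ) :
    Integrable fun z : ℂ => z ^ n * conj z ^ m * (w ‖z‖ : ℂ) := by
  have hw_meas : AEStronglyMeasurable fun z : ℂ => w ‖z‖ := by
    simpa only [pow_zero, one_mul] using (hw 0).aestronglyMeasurable
  have hpow_cont : Continuous fun z : ℂ => z ^ n * conj z ^ m :=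
    (continuous_pow n).mul (Complex.continuous_conj.pow m)
  refine (hw (n + m)).mono (hpow_cont.aestronglyMeasurable.mul
    (Complex.continuous_ofReal.comp_aestronglyMeasurable hw_meas)) (.of_forall fun z => le_of_eq ?_)
  simp only [norm_mul, norm_pow, RCLike.norm_conj, Complex.norm_real, norm_norm, pow_add]

theorem ofReal_norm_sum_sq_mul (s : Finset ℕ) (a : ℕ → ℂ) (z : ℂ) (x : ℝ) :
    ((‖∑ n ∈ s, a n * z ^ n‖ ^ 2 * x : ℝ) : ℂ) =
      ∑ n ∈ s, ∑ m ∈ s, a n * conj (a m) * (z ^ n * conj z ^ m * x) := by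
  push_cast
  rw [← Complex.mul_conj', map_sum, Finset.sum_mul_sum, Finset.sum_mul]
  refine Finset.sum_congr rfl fun n _ => ?_
  rw [Finset.sum_mul]
  refine Finset.sum_congr rfl fun m _ => ?_
  rw [map_mul, map_pow]
  ring

theorem integrable_norm_sum_sq_mul_radial (s : Finset ℕ) (a : ℕ → ℂ)
    (hw : ∀ k : ℕ, Integrable fun z : ℂ => ‖z‖ ^ k * w ‖z‖) :
    Integrable fun z : ℂ => ‖∑ n ∈ s, a n * z ^ n‖ ^ 2 * w ‖z‖ := by
  have h_complex :
      Integrable fun z : ℂ => ((‖∑ n ∈ s, a n * z ^ n‖ ^ 2 * w ‖z‖ : ℝ) : ℂ) := by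
    simp_rw [ofReal_norm_sum_sq_mul]
    exact integrable_finsetSum _ fun n _ => integrable_finsetSum _ fun m _ =>
      (integrable_pow_mul_conj_pow_mul_radial hw n m).const_mul _
  exact h_complex.re

theorem integral_norm_sum_sq_mul_radial (s : Finset ℕ) (a : ℕ → ℂ)
    (hw : ∀ k : ℕ, Integrable fun z : ℂ => ‖z‖ ^ k * w ‖z‖) :
    ∫ z : ℂ, ‖∑ n ∈ s, a n * z ^ n‖ ^ 2 * w ‖z‖ =
      ∑ n ∈ s, ‖a n‖ ^ 2 * ∫ z : ℂ, ‖z‖ ^ (2 * n) * w ‖z‖ := by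
  have h_int (n m : ℕ) :
      Integrable fun z : ℂ => a n * conj (a m) * (z ^ n * conj z ^ m * (w ‖z‖ : ℂ)) :=
    (integrable_pow_mul_conj_pow_mul_radial hw n m).const_mul _
  have h_diag (n : ℕ) (z : ℂ) :
      z ^ n * conj z ^ n * (w ‖z‖ : ℂ) = ((‖z‖ ^ (2 * n) * w ‖z‖ : ℝ) : ℂ) := by
    rw [← mul_pow, Complex.mul_conj', pow_mul]
    push_cast
    rfl
  apply Complex.ofReal_injective
  rw [← integral_complex_ofReal, Complex.ofReal_sum]
  simp_rw [ofReal_norm_sum_sq_mul]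
  rw [integral_finsetSum _ fun n _ => integrable_finsetSum _ fun m _ => h_int n m]
  refine Finset.sum_congr rfl fun n hn => ?_
  rw [integral_finsetSum _ fun m _ => h_int n m, Finset.sum_eq_single_of_mem n hn]
  · simp_rw [integral_const_mul, h_diag]
    rw [integral_complex_ofReal, Complex.mul_conj']
    push_cast
    rfl
  · intro m _ hmn
    rw [integral_const_mul,
      integral_pow_mul_conj_pow_mul_radial_eq_zero (fun r => (w r : ℂ)) hmn.symm, mul_zero]

end RadialWeight

section GaussianWeight

variable {c : ℝ}

theorem integral_norm_pow_mul_exp_neg_mul_sq (hc : 0 < c) (k : ℕ) :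
    ∫ z : ℂ, ‖z‖ ^ k * Real.exp (-c * ‖z‖ ^ 2) =
      Real.pi * c ^ (-((k : ℝ) + 2) / 2) * Real.Gamma (((k : ℝ) + 2) / 2) := by
  have hk : (-2 : ℝ) < k := by linarith [k.cast_nonneg (α := ℝ)]
  have h := Complex.integral_rpow_mul_exp_neg_mul_rpow one_le_two hk hc
  simp only [Real.rpow_natCast, Real.rpow_two] at h
  rw [h]
  ring

theorem integrable_norm_pow_mul_exp_neg_mul_sq (hc : 0 < c) (k : ℕ) :
    Integrable fun z : ℂ => ‖z‖ ^ k * Real.exp (-c * ‖z‖ ^ 2) := by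
  refine .of_integral_ne_zero ?_
  rw [integral_norm_pow_mul_exp_neg_mul_sq hc]
  have : 0 < Real.Gamma (((k : ℝ) + 2) / 2) := Real.Gamma_pos_of_pos (by positivity)
  positivity

theorem integral_norm_pow_two_mul_mul_exp_neg_mul_sq (hc : 0 < c) (n : ℕ) :
    ∫ z : ℂ, ‖z‖ ^ (2 * n) * Real.exp (-c * ‖z‖ ^ 2) =
      c⁻¹ ^ (n + 1) * (Real.pi * n.factorial) := by
  have h_half : (((2 * n : ℕ) : ℝ) + 2) / 2 = n + 1 := by push_cast; ring
  have h_neg_half : -(((2 * n : ℕ) : ℝ) + 2) / 2 = -((n + 1 : ℕ) : ℝ) := by push_cast; ring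
  rw [integral_norm_pow_mul_exp_neg_mul_sq hc, h_half, h_neg_half, Real.rpow_neg hc.le,
    Real.rpow_natCast, ← inv_pow, Real.Gamma_nat_eq_factorial]
  ring

variable (s : Finset ℕ) (a : ℕ → ℂ)

theorem integrable_norm_sum_sq_mul_exp_neg_mul_sq (hc : 0 < c) :
    Integrable fun z : ℂ => ‖∑ n ∈ s, a n * z ^ n‖ ^ 2 * Real.exp (-c * ‖z‖ ^ 2) :=
  integrable_norm_sum_sq_mul_radial (w := fun r => Real.exp (-c * r ^ 2)) s a
    (integrable_norm_pow_mul_exp_neg_mul_sq hc)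

theorem integral_norm_sum_sq_mul_exp_neg_mul_sq (hc : 0 < c) :
    ∫ z : ℂ, ‖∑ n ∈ s, a n * z ^ n‖ ^ 2 * Real.exp (-c * ‖z‖ ^ 2) =
      ∑ n ∈ s, ‖a n‖ ^ 2 * (c⁻¹ ^ (n + 1) * (Real.pi * n.factorial)) := by
  rw [integral_norm_sum_sq_mul_radial (w := fun r => Real.exp (-c * r ^ 2)) s a
    (integrable_norm_pow_mul_exp_neg_mul_sq hc)]
  simp_rw [integral_norm_pow_two_mul_mul_exp_neg_mul_sq hc]

variable {s} in
theorem integral_norm_sum_sq_mul_exp_neg_mul_sq_le {M : ℝ} (hc : 0 < c)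
    (hM : ∀ n ∈ s, c⁻¹ ^ (n + 1) ≤ M) :
    ∫ z : ℂ, ‖∑ n ∈ s, a n * z ^ n‖ ^ 2 * Real.exp (-c * ‖z‖ ^ 2) ≤
      M * ∫ z : ℂ, ‖∑ n ∈ s, a n * z ^ n‖ ^ 2 * Real.exp (-‖z‖ ^ 2) := by
  have h_one := integral_norm_sum_sq_mul_exp_neg_mul_sq s a one_pos
  simp only [neg_mul, one_mul, inv_one, one_pow] at h_one
  rw [integral_norm_sum_sq_mul_exp_neg_mul_sq s a hc, h_one, Finset.mul_sum]
  refine Finset.sum_le_sum fun n hn => ?_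
  rw [mul_left_comm]
  gcongr
  exact hM n hn

theorem setIntegral_norm_sum_sq_mul_exp_neg_sq_le {S : Set ℂ} {B : ℝ} (hc : 0 < c) (hB : 0 ≤ B)
    (hS : MeasurableSet S)
    (hSB : ∀ z ∈ S, Real.exp (-‖z‖ ^ 2) ≤ B * Real.exp (-c * ‖z‖ ^ 2)) :
    ∫ z in S, ‖∑ n ∈ s, a n * z ^ n‖ ^ 2 * Real.exp (-‖z‖ ^ 2) ≤
      B * ∫ z : ℂ, ‖∑ n ∈ s, a n * z ^ n‖ ^ 2 * Real.exp (-c * ‖z‖ ^ 2) := by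
  have h_int_one := integrable_norm_sum_sq_mul_exp_neg_mul_sq s a one_pos
  simp only [neg_mul, one_mul] at h_int_one
  have h_int := (integrable_norm_sum_sq_mul_exp_neg_mul_sq s a hc).const_mul B
  calc ∫ z in S, ‖∑ n ∈ s, a n * z ^ n‖ ^ 2 * Real.exp (-‖z‖ ^ 2)
      ≤ ∫ z in S, B * (‖∑ n ∈ s, a n * z ^ n‖ ^ 2 * Real.exp (-c * ‖z‖ ^ 2)) := by
        refine setIntegral_mono_on h_int_one.integrableOn h_int.integrableOn hS fun z hz => ?_
        rw [mul_left_comm]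
        exact mul_le_mul_of_nonneg_left (hSB z hz) (by positivity)
    _ ≤ ∫ z : ℂ, B * (‖∑ n ∈ s, a n * z ^ n‖ ^ 2 * Real.exp (-c * ‖z‖ ^ 2)) :=
        setIntegral_le_integral h_int (.of_forall fun z => by simp only [Pi.zero_apply]; positivity)
    _ = B * ∫ z : ℂ, ‖∑ n ∈ s, a n * z ^ n‖ ^ 2 * Real.exp (-c * ‖z‖ ^ 2) :=
        integral_const_mul _ _

end GaussianWeight

section Leakage

variable {L R : ℝ}

theorem exp_neg_sq_le_exp_mul_exp_neg_div_mul_sq (hR : 0 < R) {x : ℝ}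
    (hx : 0 ≤ (R - L) * (x ^ 2 - R ^ 2)) :
    Real.exp (-x ^ 2) ≤ Real.exp (-(R * (R - L))) * Real.exp (-(L / R) * x ^ 2) := by
  rw [← Real.exp_add, Real.exp_le_exp]
  have h_gap : R * (R - L) ≤ x ^ 2 - L / R * x ^ 2 := by
    rw [← sub_nonneg]
    calc 0 ≤ (R - L) * (x ^ 2 - R ^ 2) / R := div_nonneg hx hR.le
      _ = x ^ 2 - L / R * x ^ 2 - R * (R - L) := by field_simp
  linarith

theorem div_pow_le_exp_mul_sub (hL : 0 < L) (hR : 0 < R) {k : ℕ}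
    (hk : 0 ≤ (R - L) * (L ^ 2 - k)) :
    (R / L) ^ k ≤ Real.exp (L * (R - L)) := by
  have h_log : R / L ≤ Real.exp (R / L - 1) := by linarith [Real.add_one_le_exp (R / L - 1)]
  calc (R / L) ^ k ≤ Real.exp (R / L - 1) ^ k := by gcongr
    _ = Real.exp (k * (R / L - 1)) := (Real.exp_nat_mul _ _).symm
    _ ≤ Real.exp (L * (R - L)) := by
      rw [Real.exp_le_exp, ← sub_nonneg]
      calc 0 ≤ (R - L) * (L ^ 2 - k) / L := div_nonneg hk hL.le
        _ = L * (R - L) - k * (R / L - 1) := by field_simp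

/-- The sign conditions cover both tails: `n + 1 ≤ L²` and `R ≤ ‖z‖` when `L < R`, the reverse
inequalities when `R < L`. -/
theorem setIntegral_norm_sum_sq_mul_exp_neg_sq_le_exp_neg_sub_sq {s : Finset ℕ} (a : ℕ → ℂ)
    {S : Set ℂ} (hL : 0 < L) (hR : 0 < R) (hS : MeasurableSet S)
    (hSR : ∀ z ∈ S, 0 ≤ (R - L) * (‖z‖ ^ 2 - R ^ 2))
    (hsL : ∀ n ∈ s, 0 ≤ (R - L) * (L ^ 2 - (n + 1))) :
    ∫ z in S, ‖∑ n ∈ s, a n * z ^ n‖ ^ 2 * Real.exp (-‖z‖ ^ 2) ≤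
      Real.exp (-(R - L) ^ 2) *
        ∫ z : ℂ, ‖∑ n ∈ s, a n * z ^ n‖ ^ 2 * Real.exp (-‖z‖ ^ 2) := by
  have hc : 0 < L / R := div_pos hL hR
  have h_coeff : ∀ n ∈ s, (L / R)⁻¹ ^ (n + 1) ≤ Real.exp (L * (R - L)) := fun n hn => by
    rw [inv_div]
    exact div_pow_le_exp_mul_sub hL hR (by exact_mod_cast hsL n hn)
  have h_exp : Real.exp (-(R - L) ^ 2) =
      Real.exp (-(R * (R - L))) * Real.exp (L * (R - L)) := by
    rw [← Real.exp_add]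
    ring_nf
  rw [h_exp, mul_assoc]
  exact (setIntegral_norm_sum_sq_mul_exp_neg_sq_le s a hc (Real.exp_nonneg _) hS fun z hz =>
      exp_neg_sq_le_exp_mul_exp_neg_div_mul_sq hR (hSR z hz)).trans <|
    mul_le_mul_of_nonneg_left (integral_norm_sum_sq_mul_exp_neg_mul_sq_le a hc h_coeff)
      (Real.exp_nonneg _)

theorem measurableSet_annulus (r₁ r₂ : ℝ) : MeasurableSet {z : ℂ | r₁ ≤ ‖z‖ ∧ ‖z‖ < r₂} :=
  (measurableSet_le measurable_const measurable_norm).inter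
    (measurableSet_lt measurable_norm measurable_const)

theorem setIntegral_annulus_norm_sum_sq_mul_exp_neg_sq_le {s : Finset ℕ} (a : ℕ → ℂ) {l r w : ℝ}
    (hl : 0 ≤ l) (hr : 0 ≤ r) (hw : 0 < w)
    (hs : ∀ n ∈ s, l ^ 2 ≤ n + 1 ∧ n + 1 ≤ (l + w) ^ 2) :
    ∫ z in {z : ℂ | r ≤ ‖z‖ ∧ ‖z‖ < r + w}, ‖∑ n ∈ s, a n * z ^ n‖ ^ 2 * Real.exp (-‖z‖ ^ 2) ≤
      Real.exp (-(max (|r - l| - w) 0) ^ 2) *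
        ∫ z : ℂ, ‖∑ n ∈ s, a n * z ^ n‖ ^ 2 * Real.exp (-‖z‖ ^ 2) := by
  have hS := measurableSet_annulus r (r + w)
  rcases le_or_gt |r - l| w with h_near | h_far
  · rw [max_eq_right (by linarith)]
    simpa only [sub_self] using
      setIntegral_norm_sum_sq_mul_exp_neg_sq_le_exp_neg_sub_sq (s := s) a one_pos one_pos hS
        (by simp) (by simp)
  rw [max_eq_left (by linarith)]
  rcases lt_abs.mp h_far with h_outer | h_inner
  · have h_dist : |r - l| - w = r - (l + w) := by rw [abs_of_pos (by linarith)]; ring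
    rw [h_dist]
    refine setIntegral_norm_sum_sq_mul_exp_neg_sq_le_exp_neg_sub_sq a (by linarith) (by linarith)
      hS (fun z hz => mul_nonneg (by linarith) (sub_nonneg.mpr ?_))
      fun n hn => mul_nonneg (by linarith) (sub_nonneg.mpr (hs n hn).2)
    exact pow_le_pow_left₀ hr hz.1 2
  · have h_dist : (|r - l| - w) ^ 2 = (r + w - l) ^ 2 := by
      rw [abs_of_neg (by linarith)]
      ring
    rw [h_dist]
    refine setIntegral_norm_sum_sq_mul_exp_neg_sq_le_exp_neg_sub_sq a (by linarith) (by linarith)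
      hS (fun z hz => mul_nonneg_of_nonpos_of_nonpos (by linarith) (sub_nonpos.mpr ?_))
      fun n hn => mul_nonneg_of_nonpos_of_nonpos (by linarith) (sub_nonpos.mpr (hs n hn).1)
    exact pow_le_pow_left₀ (norm_nonneg z) hz.2.le 2

end Leakage

theorem fockNorm_sq_s11 {E : Type*} [NormedAddCommGroup E] (F : ℂ → E) :
    fockNorm F ^ 2 = (1 / Real.pi) * ∫ z : ℂ, ‖F z‖ ^ 2 * Real.exp (-‖z‖ ^ 2) :=
  Real.sq_sqrt (mul_nonneg (by positivity) (integral_nonneg fun z => by positivity))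

theorem sq_le_add_one_and_add_one_le_sq_of_mem_block {D ℓ n : ℕ}
    (hn : n ∈ (Finset.Icc 1 D).filter fun n => ℓ ^ 2 ≤ n ∧ n < (ℓ + 1) ^ 2) :
    (ℓ : ℝ) ^ 2 ≤ n + 1 ∧ (n : ℝ) + 1 ≤ (ℓ + 1) ^ 2 := by
  obtain ⟨-, h_lower, h_upper⟩ := Finset.mem_filter.mp hn
  exact_mod_cast And.intro (h_lower.trans n.le_succ) (Nat.succ_le_of_lt h_upper)

theorem stmt11_general {s : Finset ℕ} (a : ℕ → ℂ) {l r w : ℝ} (hl : 0 ≤ l) (hr : 0 ≤ r)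
    (hw : 0 < w) (hs : ∀ n ∈ s, l ^ 2 ≤ n + 1 ∧ n + 1 ≤ (l + w) ^ 2) :
    (1 / Real.pi) *
        ∫ z in {z : ℂ | r ≤ ‖z‖ ∧ ‖z‖ < r + w},
          ‖∑ n ∈ s, a n * z ^ n‖ ^ 2 * Real.exp (-‖z‖ ^ 2)
      ≤ Real.exp (-(max (|r - l| - w) 0) ^ 2) *
          fockNorm (fun z => ∑ n ∈ s, a n * z ^ n) ^ 2 := by
  rw [fockNorm_sq_s11, mul_left_comm]
  exact mul_le_mul_of_nonneg_left
    (setIntegral_annulus_norm_sum_sq_mul_exp_neg_sq_le a hl hr hw hs) (by positivity)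

/-- **Single-block leakage estimate.** For `ℓ ≥ 1` and `j ≥ 0`,
`(1/π) ∫_{j ≤ |z| < j+1} |U_ℓ|² e^{−|z|²} dm ≤ e^{1/4} e^{−((|j−ℓ|−1)₊)²} ‖U_ℓ‖_F²`. -/
theorem stmt11 (D : ℕ) (hD : 1 ≤ D) (a : ℕ → ℂ) (ℓ : ℕ) (hℓ : 1 ≤ ℓ) (j : ℕ) :
    (1 / Real.pi) *
        ∫ z in {z : ℂ | (j : ℝ) ≤ ‖z‖ ∧ ‖z‖ < (j : ℝ) + 1},
          ‖Ublock D ℓ a z‖ ^ 2 * Real.exp (-‖z‖ ^ 2)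
      ≤ Real.exp (1 / 4) * Real.exp (-(max (|(j : ℝ) - (ℓ : ℝ)| - 1) 0) ^ 2) *
          (fockNorm (Ublock D ℓ a)) ^ 2 := by
  have h_sharp := stmt11_general a ℓ.cast_nonneg j.cast_nonneg one_pos
    fun _ => sq_le_add_one_and_add_one_le_sq_of_mem_block (D := D)
  exact h_sharp.trans (mul_le_mul_of_nonneg_right
    (le_mul_of_one_le_left (Real.exp_nonneg _) (Real.one_le_exp (by norm_num))) (sq_nonneg _))
end
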